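/- arXiv:1512.00379 — 2 statements merged into one kernel-verified Lean document; each statement's English description precedes it below -/
import Mathlib

section
/- Let α_n be an optimal set of n-means for P (n ≥ 2), with O_n := {σ ∈ {1,2}* : S_σ(2/3) ∈ α_n}. Then the nth quantization error satisfies V_n = Σ_{σ ∈ O_n} P(J_σ)·λ(J_σ)²·V = Σ_{σ ∈ O_n} 3^{|σ|−c(σ)} / 2^{4|σ|+2c(σ)} · V, where V = 16/153 and c(σ) is the number of 1's in σ. -/
open MeasureTheory Set
open scoped ENNReal Classical

noncomputable section

/-- The similarity map `S₁(x) = x/4`. -/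
def S1 (x : ℝ) : ℝ := x / 4

/-- The similarity map `S₂(x) = x/2 + 1/2`. -/
def S2 (x : ℝ) : ℝ := x / 2 + 1 / 2

/-- `P` satisfies the self-similarity relation `P = (1/4)·P∘S₁⁻¹ + (3/4)·P∘S₂⁻¹`. -/
def SelfSimilar (P : Measure ℝ) : Prop :=
  P = (1/4 : ℝ≥0∞) • P.map S1 + (3/4 : ℝ≥0∞) • P.map S2

/-- For a word `σ` over `{1,2}` (encoded as `Fin 2`, `0 ↦ S₁`, `1 ↦ S₂`),
the composition `S_σ = S_{σ₁} ∘ ⋯ ∘ S_{σ_k}`. -/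
def Sw : List (Fin 2) → ℝ → ℝ
  | [] => id
  | i :: σ => (if i = 0 then S1 else S2) ∘ Sw σ

/-- `p_σ`, the product of the probabilities `p₁ = 1/4`, `p₂ = 3/4` along `σ`. -/
def pw : List (Fin 2) → ℝ
  | [] => 1
  | i :: σ => (if i = 0 then (1:ℝ)/4 else 3/4) * pw σ

/-- `s_σ`, the product of the contraction ratios `s₁ = 1/4`, `s₂ = 1/2` along `σ`. -/
def sw : List (Fin 2) → ℝ
  | [] => 1
  | i :: σ => (if i = 0 then (1:ℝ)/4 else 1/2) * sw σ

/-- `c(σ)`, the number of occurrences of the symbol `1` (encoded `0`) in `σ`. -/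
def cnt (σ : List (Fin 2)) : ℕ := σ.count 0

/-- The cylinder interval `J_σ = S_σ([0,1])`. -/
def J (σ : List (Fin 2)) : Set ℝ := Sw σ '' Set.Icc 0 1

/-- The distortion error `V(P;α) = ∫ min_{a ∈ α} (x-a)² dP`. -/
def distortion (P : Measure ℝ) (α : Finset ℝ) : ℝ :=
  ∫ x, sInf ((fun a => (x - a) ^ 2) '' (α : Set ℝ)) ∂P

/-- The `n`-th quantization error `V_n`. -/
def qError (P : Measure ℝ) (n : ℕ) : ℝ :=
  sInf {e | ∃ α : Finset ℝ, α.Nonempty ∧ α.card ≤ n ∧ e = distortion P α}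

/-- `α` is an optimal set of `n`-means for `P`. -/
def IsOptimal (P : Measure ℝ) (n : ℕ) (α : Finset ℝ) : Prop :=
  α.Nonempty ∧ α.card ≤ n ∧ distortion P α = qError P n

/-- `q_σ := P(J_σ) · λ(J_σ)²`. -/
def qnt (P : Measure ℝ) (σ : List (Fin 2)) : ℝ :=
  (P (J σ)).toReal * ((volume (J σ)).toReal) ^ 2

/-- pointwise distance function -/
def dd (α : Finset ℝ) (x : ℝ) : ℝ := sInf ((fun a => (x - a) ^ 2) '' (α : Set ℝ))

lemma distortion_eq (P : Measure ℝ) (α : Finset ℝ) : distortion P α = ∫ x, dd α x ∂P := rfl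

lemma dd_le {α : Finset ℝ} {a : ℝ} (ha : a ∈ α) (x : ℝ) : dd α x ≤ (x - a) ^ 2 := by
  apply csInf_le
  · exact ⟨0, by rintro _ ⟨b, _, rfl⟩; positivity⟩
  · exact ⟨a, by exact_mod_cast ha, rfl⟩

lemma dd_exists {α : Finset ℝ} (h : α.Nonempty) (x : ℝ) : ∃ a ∈ α, dd α x = (x - a) ^ 2 := by
  have h1 : ((fun a => (x - a) ^ 2) '' (α : Set ℝ)).Nonempty := by
    obtain ⟨a, ha⟩ := h
    exact ⟨_, a, by exact_mod_cast ha, rfl⟩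
  have h2 : ((fun a => (x - a) ^ 2) '' (α : Set ℝ)).Finite := (α.finite_toSet).image _
  obtain ⟨a, ha, hh⟩ := h1.csInf_mem h2
  exact ⟨a, by exact_mod_cast ha, hh.symm⟩

lemma le_dd {α : Finset ℝ} (h : α.Nonempty) {x r : ℝ} (H : ∀ a ∈ α, r ≤ (x - a) ^ 2) :
    r ≤ dd α x := by
  obtain ⟨a, ha, e⟩ := dd_exists h x
  rw [e]; exact H a ha

lemma dd_nonneg (α : Finset ℝ) (x : ℝ) : 0 ≤ dd α x := by
  apply Real.sInf_nonneg
  rintro _ ⟨b, _, rfl⟩; positivity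

lemma dd_cont (α : Finset ℝ) : Continuous (dd α) := by
  by_cases h : α.Nonempty
  · have : dd α = fun x => α.inf' h (fun a => (x - a) ^ 2) := by
      funext x
      rw [Finset.inf'_eq_csInf_image]; rfl
    rw [this]
    exact Continuous.finset_inf'_apply h (fun a _ => by fun_prop)
  · rw [Finset.not_nonempty_iff_eq_empty] at h
    subst h
    have : dd ∅ = fun _ => 0 := by funext x; simp [dd]
    rw [this]; exact continuous_const

lemma S1_meas : Measurable S1 := by unfold S1; fun_prop
lemma S2_meas : Measurable S2 := by unfold S2; fun_prop

lemma P_apply {P : Measure ℝ} (hP : SelfSimilar P) {A : Set ℝ} (hA : MeasurableSet A) :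
    P A = (1/4 : ℝ≥0∞) * P (S1 ⁻¹' A) + (3/4 : ℝ≥0∞) * P (S2 ⁻¹' A) := by
  conv_lhs => rw [hP]
  simp [Measure.map_apply S1_meas hA, Measure.map_apply S2_meas hA]

lemma P_apply_real {P : Measure ℝ} [IsProbabilityMeasure P] (hP : SelfSimilar P)
    {A : Set ℝ} (hA : MeasurableSet A) :
    P.real A = (1/4) * P.real (S1 ⁻¹' A) + (3/4) * P.real (S2 ⁻¹' A) := by
  unfold Measure.real
  conv_lhs => rw [P_apply hP hA]
  rw [ENNReal.toReal_add (ENNReal.mul_ne_top (by norm_num) (measure_ne_top _ _))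
    (ENNReal.mul_ne_top (by
      exact ENNReal.div_ne_top (by norm_num) (by norm_num)) (measure_ne_top _ _))]
  simp [ENNReal.toReal_mul, ENNReal.toReal_div]

lemma P_step {P : Measure ℝ} [IsProbabilityMeasure P] (hP : SelfSimilar P) {R : ℝ} (hR : 0 ≤ R) :
    P.real (Icc (-R) (1 + R)) ≤ P.real (Icc (-(R/2)) (1 + R/2)) := by
  rw [P_apply_real hP (A := Icc (-(R/2)) (1 + R/2)) measurableSet_Icc]
  have h1 : P.real (Icc (-R) (1 + R)) ≤ P.real (S1 ⁻¹' Icc (-(R/2)) (1 + R/2)) := by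
    refine measureReal_mono ?_
    intro x hx
    simp only [mem_Icc, mem_preimage, S1] at *
    constructor <;> linarith [hx.1, hx.2]
  have h2 : P.real (Icc (-R) (1 + R)) ≤ P.real (S2 ⁻¹' Icc (-(R/2)) (1 + R/2)) := by
    refine measureReal_mono ?_
    intro x hx
    simp only [mem_Icc, mem_preimage, S2] at *
    constructor <;> linarith [hx.1, hx.2]
  linarith

lemma P_step_iter {P : Measure ℝ} [IsProbabilityMeasure P] (hP : SelfSimilar P) {R : ℝ}
    (hR : 0 ≤ R) (k : ℕ) :
    P.real (Icc (-R) (1 + R)) ≤ P.real (Icc (-(R/2^k)) (1 + R/2^k)) := by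
  induction k with
  | zero => simp
  | succ k ih =>
    refine ih.trans ?_
    have := P_step hP (R := R/2^k) (by positivity)
    rwa [div_div, ← pow_succ] at this

lemma P_Icc {P : Measure ℝ} [IsProbabilityMeasure P] (hP : SelfSimilar P) :
    P.real (Icc 0 1) = 1 := by
  have key : ∀ R : ℝ, 0 ≤ R → P.real (Icc (-R) (1 + R)) ≤ P.real (Icc 0 1) := by
    intro R hR
    have hI : (Icc (0:ℝ) 1) = ⋂ k : ℕ, Icc (-(R/2^k)) (1 + R/2^k) := by
      ext x
      simp only [mem_Icc, mem_iInter]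
      have hlim : Filter.Tendsto (fun k : ℕ => R/2^k) Filter.atTop (nhds 0) := by
        have := (tendsto_pow_atTop_nhds_zero_of_lt_one (r := (1/2:ℝ)) (by norm_num)
          (by norm_num)).const_mul R
        simp only [mul_zero] at this
        refine this.congr (fun k => ?_)
        rw [one_div, inv_pow]; rfl
      constructor
      · intro h k
        have : 0 ≤ R/2^k := by positivity
        constructor <;> linarith [h.1, h.2]
      · intro h
        constructor
        · refine le_of_tendsto' (x := Filter.atTop) (by simpa using hlim.neg) (fun k => (h k).1)
        · refine ge_of_tendsto' (x := Filter.atTop) (by simpa using hlim.const_add 1)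
            (fun k => (h k).2)
    have hanti : Antitone (fun k : ℕ => Icc (-(R/2^k)) (1 + R/2^k)) := by
      intro i j hij
      have : R/2^j ≤ R/2^i := by
        apply div_le_div_of_nonneg_left hR (by positivity)
        exact pow_le_pow_right₀ (by norm_num) hij
      apply Icc_subset_Icc <;> linarith
    have ht := tendsto_measure_iInter_atTop (μ := P)
      (s := fun k : ℕ => Icc (-(R/2^k)) (1 + R/2^k))
      (fun k => measurableSet_Icc.nullMeasurableSet) hanti ⟨0, measure_ne_top _ _⟩
    rw [← hI] at ht
    have ht' := (ENNReal.tendsto_toReal (measure_ne_top P (Icc 0 1))).comp ht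
    refine ge_of_tendsto' ht' (fun k => P_step_iter hP hR k)
  have hU : (⋃ k : ℕ, Icc (-(k:ℝ)) (1 + k)) = univ := by
    ext x
    simp only [mem_iUnion, mem_univ, iff_true, mem_Icc]
    obtain ⟨k, hk⟩ := exists_nat_ge |x|
    exact ⟨k, by linarith [neg_abs_le x], by linarith [le_abs_self x]⟩
  have hmono : Monotone (fun k : ℕ => Icc (-(k:ℝ)) (1 + k)) := by
    intro i j hij
    have : (i:ℝ) ≤ j := by exact_mod_cast hij
    apply Icc_subset_Icc <;> linarith
  have ht := tendsto_measure_iUnion_atTop (μ := P) hmono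
  rw [hU] at ht
  have ht' := (ENNReal.tendsto_toReal (measure_ne_top P univ)).comp ht
  have h1 := le_of_tendsto' ht' (fun k => key k (by positivity))
  rw [measure_univ, ENNReal.toReal_one] at h1
  exact le_antisymm measureReal_le_one h1

lemma ae_Icc {P : Measure ℝ} [IsProbabilityMeasure P] (hP : SelfSimilar P) :
    ∀ᵐ x ∂P, x ∈ Icc (0:ℝ) 1 := by
  have h := P_Icc hP
  rw [ae_iff]
  have h2 : P (Icc (0:ℝ) 1)ᶜ = 0 := by
    rw [prob_compl_eq_zero_iff measurableSet_Icc]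
    unfold Measure.real at h
    rwa [ENNReal.toReal_eq_one_iff] at h
  exact h2

lemma integ {P : Measure ℝ} [IsProbabilityMeasure P] (hP : SelfSimilar P) {f : ℝ → ℝ}
    (hf : Continuous f) : Integrable f P := by
  obtain ⟨C, hC⟩ := (isCompact_Icc (a := (0:ℝ)) (b := 1)).exists_bound_of_continuousOn
    hf.continuousOn
  exact Integrable.of_bound hf.aestronglyMeasurable C ((ae_Icc hP).mono hC)

lemma int_ss' {P : Measure ℝ} [IsProbabilityMeasure P] (hP : SelfSimilar P) {f : ℝ → ℝ}
    (hfm : Measurable f) (hf : Integrable f P) :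
    ∫ x, f x ∂P = (1/4) * ∫ x, f (x/4) ∂P + (3/4) * ∫ x, f (x/2 + 1/2) ∂P := by
  have h34 : (3/4 : ℝ≥0∞) ≠ ∞ := ENNReal.div_ne_top (by norm_num) (by norm_num)
  have hf' := hf
  rw [hP, integrable_add_measure] at hf'
  conv_lhs => rw [hP]
  rw [integral_add_measure hf'.1 hf'.2, integral_smul_measure, integral_smul_measure,
    integral_map S1_meas.aemeasurable hfm.aestronglyMeasurable,
    integral_map S2_meas.aemeasurable hfm.aestronglyMeasurable]
  simp [S1, S2, ENNReal.toReal_div]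

lemma int_ss {P : Measure ℝ} [IsProbabilityMeasure P] (hP : SelfSimilar P) {f : ℝ → ℝ}
    (hf : Continuous f) :
    ∫ x, f x ∂P = (1/4) * ∫ x, f (x/4) ∂P + (3/4) * ∫ x, f (x/2 + 1/2) ∂P :=
  int_ss' hP hf.measurable (integ hP hf)

lemma mean_P {P : Measure ℝ} [IsProbabilityMeasure P] (hP : SelfSimilar P) :
    ∫ x, x ∂P = 2/3 := by
  have h := int_ss hP (f := fun x => x) continuous_id
  rw [integral_add (integ hP (by fun_prop)) (integ hP (by fun_prop)), integral_div,
    integral_div] at h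
  simp at h
  linarith

lemma sq_P {P : Measure ℝ} [IsProbabilityMeasure P] (hP : SelfSimilar P) :
    ∫ x, x^2 ∂P = 16/153 + 4/9 := by
  have h := int_ss hP (f := fun x => x^2) (by fun_prop)
  have e1 : ∀ x : ℝ, (x/4)^2 = (1/16) * x^2 := fun x => by ring
  have e2 : ∀ x : ℝ, (x/2+1/2)^2 = (1/4) * x^2 + ((1/2) * x + 1/4) := fun x => by ring
  simp only [e1, e2] at h
  rw [integral_add (integ hP (by fun_prop)) (integ hP (by fun_prop)),
    integral_add (integ hP (by fun_prop)) (integ hP (by fun_prop)), integral_const_mul,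
    integral_const_mul, integral_const_mul, mean_P hP] at h
  simp at h
  linarith

lemma quad_P {P : Measure ℝ} [IsProbabilityMeasure P] (hP : SelfSimilar P) (A B C : ℝ) :
    ∫ x, (A * x^2 + (B * x + C)) ∂P = A * (16/153 + 4/9) + (B * (2/3) + C) := by
  rw [integral_add (integ hP (by fun_prop)) (integ hP (by fun_prop)),
    integral_add (integ hP (by fun_prop)) (integ hP (by fun_prop)), integral_const_mul,
    integral_const_mul, mean_P hP, sq_P hP]
  simp

lemma var_P {P : Measure ℝ} [IsProbabilityMeasure P] (hP : SelfSimilar P) (s c : ℝ) :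
    ∫ x, s * (x - c)^2 ∂P = s * (16/153 + (c - 2/3)^2) := by
  have e : ∀ x : ℝ, s * (x - c)^2 = s * x^2 + ((-2*s*c) * x + s*c^2) := fun x => by ring
  simp only [e]
  rw [quad_P hP]; ring

lemma int_mono01 {P : Measure ℝ} [IsProbabilityMeasure P] (hP : SelfSimilar P) {f g : ℝ → ℝ}
    (hf : Continuous f) (hg : Continuous g) (h : ∀ x, 0 ≤ x → x ≤ 1 → f x ≤ g x) :
    ∫ x, f x ∂P ≤ ∫ x, g x ∂P :=
  integral_mono_ae (integ hP hf) (integ hP hg) ((ae_Icc hP).mono fun x hx => h x hx.1 hx.2)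

lemma int_congr01 {P : Measure ℝ} [IsProbabilityMeasure P] (hP : SelfSimilar P) {f g : ℝ → ℝ}
    (h : ∀ x, 0 ≤ x → x ≤ 1 → f x = g x) :
    ∫ x, f x ∂P = ∫ x, g x ∂P :=
  integral_congr_ae ((ae_Icc hP).mono fun x hx => h x hx.1 hx.2)

/-- lower bound by a square -/
lemma lb_sq {P : Measure ℝ} [IsProbabilityMeasure P] (hP : SelfSimilar P) {g : ℝ → ℝ}
    (hg : Continuous g) (s c : ℝ) (h : ∀ x, 0 ≤ x → x ≤ 1 → s * (x - c)^2 ≤ g x) :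
    s * (16/153 + (c - 2/3)^2) ≤ ∫ x, g x ∂P := by
  rw [← var_P hP]
  exact int_mono01 hP (by fun_prop) hg h

/-- lower bound by a distortion -/
lemma lb_dd {P : Measure ℝ} [IsProbabilityMeasure P] (hP : SelfSimilar P) {g : ℝ → ℝ}
    (hg : Continuous g) (s : ℝ) (β : Finset ℝ)
    (h : ∀ x, 0 ≤ x → x ≤ 1 → s * dd β x ≤ g x) :
    s * distortion P β ≤ ∫ x, g x ∂P := by
  rw [distortion_eq, ← integral_const_mul]
  exact int_mono01 hP ((dd_cont β).const_mul s) hg h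

lemma int_nonneg (P : Measure ℝ) (α : Finset ℝ) (u : ℝ → ℝ) : 0 ≤ ∫ x, dd α (u x) ∂P :=
  integral_nonneg fun _ => dd_nonneg _ _

lemma dist_nonneg' (P : Measure ℝ) (α : Finset ℝ) : 0 ≤ distortion P α :=
  int_nonneg P α id

lemma integ' {P : Measure ℝ} [IsProbabilityMeasure P] (hP : SelfSimilar P) {f : ℝ → ℝ}
    (hf : Measurable f) (C : ℝ) (h : ∀ x, 0 ≤ x → x ≤ 1 → |f x| ≤ C) : Integrable f P :=
  Integrable.of_bound hf.aestronglyMeasurable C ((ae_Icc hP).mono fun x hx => h x hx.1 hx.2)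

def ch (t x : ℝ) : ℝ := if x ≤ t then 1 else 0
def Fc (P : Measure ℝ) (t : ℝ) : ℝ := ∫ x, ch t x ∂P
def Ic (P : Measure ℝ) (t : ℝ) : ℝ := ∫ x, ch t x * x ∂P

lemma ch_meas (t : ℝ) : Measurable (ch t) :=
  Measurable.ite measurableSet_Iic measurable_const measurable_const

lemma ch_nonneg (t x : ℝ) : 0 ≤ ch t x := by unfold ch; split_ifs <;> norm_num
lemma ch_le_one (t x : ℝ) : ch t x ≤ 1 := by unfold ch; split_ifs <;> norm_num

lemma ch_int {P : Measure ℝ} [IsProbabilityMeasure P] (hP : SelfSimilar P) (t : ℝ) :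
    Integrable (ch t) P :=
  integ' hP (ch_meas t) 1 fun x _ _ => by
    rw [abs_of_nonneg (ch_nonneg t x)]; exact ch_le_one t x

lemma chx_int {P : Measure ℝ} [IsProbabilityMeasure P] (hP : SelfSimilar P) (t : ℝ) :
    Integrable (fun x => ch t x * x) P :=
  integ' hP ((ch_meas t).mul measurable_id) 1 fun x h0 h1 => by
    have := ch_nonneg t x
    have := ch_le_one t x
    rw [abs_of_nonneg (by positivity)]
    nlinarith

lemma Fc_nonneg (P : Measure ℝ) (t : ℝ) : 0 ≤ Fc P t := integral_nonneg fun x => ch_nonneg t x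

lemma Fc_le_one {P : Measure ℝ} [IsProbabilityMeasure P] (hP : SelfSimilar P) (t : ℝ) :
    Fc P t ≤ 1 := by
  have : Fc P t ≤ ∫ _x, (1:ℝ) ∂P :=
    integral_mono (ch_int hP t) (integrable_const _) (fun x => ch_le_one t x)
  simpa using this

lemma Ic_nonneg {P : Measure ℝ} [IsProbabilityMeasure P] (hP : SelfSimilar P) (t : ℝ) :
    0 ≤ Ic P t :=
  integral_nonneg_of_ae ((ae_Icc hP).mono fun x hx => mul_nonneg (ch_nonneg t x) hx.1)

lemma Fc_neg {P : Measure ℝ} [IsProbabilityMeasure P] (hP : SelfSimilar P) {t : ℝ} (ht : t < 0) :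
    Fc P t = 0 ∧ Ic P t = 0 := by
  unfold Fc Ic
  constructor
  · rw [int_congr01 hP (g := fun _ => 0)]
    · simp
    · intro x h0 _; unfold ch; rw [if_neg (by linarith)]
  · rw [int_congr01 hP (g := fun _ => 0)]
    · simp
    · intro x h0 _; unfold ch; rw [if_neg (by linarith)]; simp

lemma Fc_lo {P : Measure ℝ} [IsProbabilityMeasure P] (hP : SelfSimilar P) {t : ℝ} (ht : t < 1/2) :
    Fc P t = 1/4 * Fc P (4*t) ∧ Ic P t = 1/16 * Ic P (4*t) := by
  unfold Fc Ic
  constructor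
  · rw [int_ss' hP (ch_meas t) (ch_int hP t),
      int_congr01 hP (f := fun x => ch t (x/4)) (g := ch (4*t)),
      int_congr01 hP (f := fun x => ch t (x/2+1/2)) (g := fun _ => 0)]
    · simp
    · intro x h0 _; unfold ch; rw [if_neg (by linarith)]
    · intro x h0 _; unfold ch; congr 1; rw [div_le_iff₀ (by norm_num)]; ring_nf
  · rw [int_ss' hP (f := fun x => ch t x * x) ((ch_meas t).mul measurable_id) (chx_int hP t),
      int_congr01 hP (f := fun x => ch t (x/4) * (x/4)) (g := fun x => (1/4) * (ch (4*t) x * x)),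
      int_congr01 hP (f := fun x => ch t (x/2+1/2) * (x/2+1/2)) (g := fun _ => 0)]
    · rw [integral_const_mul]; simp; ring
    · intro x h0 _; unfold ch; rw [if_neg (by linarith)]; simp
    · intro x h0 _
      have : ch t (x/4) = ch (4*t) x := by
        unfold ch; congr 1; rw [div_le_iff₀ (by norm_num)]; ring_nf
      simp only [this]; ring

lemma Fc_hi {P : Measure ℝ} [IsProbabilityMeasure P] (hP : SelfSimilar P) {t : ℝ} (ht : 1/2 ≤ t) :
    Fc P t = 1/4 + 3/4 * Fc P (2*t-1) ∧
    Ic P t = 1/24 + 3/8 * (Fc P (2*t-1) + Ic P (2*t-1)) := by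
  have e : ∀ x, ch t (x/2+1/2) = ch (2*t-1) x := by
    intro x; unfold ch
    by_cases h : x ≤ 2*t-1
    · rw [if_pos h, if_pos (by linarith)]
    · rw [if_neg h, if_neg (by intro h'; apply h; linarith)]
  unfold Fc Ic
  constructor
  · rw [int_ss' hP (ch_meas t) (ch_int hP t),
      int_congr01 hP (f := fun x => ch t (x/4)) (g := fun _ => 1)]
    · simp only [e]; simp
    · intro x h0 _; unfold ch; rw [if_pos (by linarith)]
  · rw [int_ss' hP (f := fun x => ch t x * x) ((ch_meas t).mul measurable_id) (chx_int hP t),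
      int_congr01 hP (f := fun x => ch t (x/4) * (x/4)) (g := fun x => (1/4) * x),
      int_congr01 hP (f := fun x => ch t (x/2+1/2) * (x/2+1/2))
        (g := fun x => (1/2) * (ch (2*t-1) x + ch (2*t-1) x * x))]
    · rw [integral_const_mul, integral_const_mul, mean_P hP,
        integral_add (ch_int hP _) (chx_int hP _)]; ring
    · intro x _ _; simp only [e]; ring
    · intro x h0 _; unfold ch; rw [if_pos (by linarith)]; ring

lemma G_step {P : Measure ℝ} [IsProbabilityMeasure P] (hP : SelfSimilar P) {c : ℝ} (hc : 0 ≤ c)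
    (H : ∀ t, -c ≤ Ic P t - 2/3 * (Fc P t)^2) (t : ℝ) :
    -(3/8*c) ≤ Ic P t - 2/3 * (Fc P t)^2 := by
  by_cases ht : t < 1/2
  · obtain ⟨h1, h2⟩ := Fc_lo hP ht
    have := H (4*t)
    rw [h1, h2]; nlinarith
  · obtain ⟨h1, h2⟩ := Fc_hi hP (not_lt.mp ht)
    have := H (2*t-1)
    have a1 := Fc_nonneg P (2*t-1)
    have a2 := Fc_le_one hP (2*t-1)
    rw [h1, h2]; nlinarith [mul_nonneg a1 (sub_nonneg.mpr a2)]

lemma G_nonneg {P : Measure ℝ} [IsProbabilityMeasure P] (hP : SelfSimilar P) (t : ℝ) :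
    2/3 * (Fc P t)^2 ≤ Ic P t := by
  have H : ∀ k : ℕ, ∀ t, -((3/8:ℝ)^k) ≤ Ic P t - 2/3 * (Fc P t)^2 := by
    intro k
    induction k with
    | zero =>
      intro t
      have := Ic_nonneg hP t
      have a1 := Fc_nonneg P t
      have a2 := Fc_le_one hP t
      norm_num
      nlinarith
    | succ k ih =>
      intro t
      have := G_step hP (c := (3/8:ℝ)^k) (by positivity) ih t
      rw [pow_succ]; linarith
  have hl : Filter.Tendsto (fun k : ℕ => -((3/8:ℝ)^k)) Filter.atTop (nhds 0) := by
    have := (tendsto_pow_atTop_nhds_zero_of_lt_one (r := (3/8:ℝ)) (by norm_num) (by norm_num)).neg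
    simpa using this
  have := le_of_tendsto' hl (fun k => H k t)
  linarith

lemma Fc_pos {P : Measure ℝ} [IsProbabilityMeasure P] (hP : SelfSimilar P) {t : ℝ} (ht : 0 < t) :
    0 < Fc P t := by
  have H : ∀ k : ℕ, Fc P ((1/4)^k) = (1/4)^k := by
    intro k
    induction k with
    | zero =>
      unfold Fc
      rw [int_congr01 hP (g := fun _ => 1)]
      · simp
      · intro x _ h1; unfold ch; rw [if_pos (by simpa using h1)]
    | succ k ih =>
      have : ((1:ℝ)/4)^k ≤ 1 := pow_le_one₀ (by norm_num) (by norm_num)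
      rw [(Fc_lo hP (by rw [pow_succ]; linarith)).1, pow_succ,
        show (4:ℝ) * ((1/4)^k * (1/4)) = (1/4)^k by ring, ih]
      ring
  obtain ⟨k, hk⟩ := exists_pow_lt_of_lt_one ht (show (1/4:ℝ) < 1 by norm_num)
  have h1 : Fc P ((1/4)^k) ≤ Fc P t := by
    apply integral_mono (ch_int hP _) (ch_int hP _)
    intro x
    unfold ch
    simp only
    split_ifs with h h'
    · exact le_rfl
    · exfalso; apply h'; linarith
    · norm_num
    · exact le_rfl
  rw [H k] at h1
  have : (0:ℝ) < (1/4)^k := by positivity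
  linarith

lemma special {P : Measure ℝ} [IsProbabilityMeasure P] (hP : SelfSimilar P) {f : ℝ → ℝ}
    (hf : Continuous f) {a b : ℝ} (hab : a < b) (h1 : 1 < a + b)
    (H : ∀ x, 0 ≤ x → x ≤ 1 →
      (x - a)^2 ≤ f x ∧ 2*x ≤ a + b ∨ (x - b)^2 ≤ f x ∧ a + b < 2*x) :
    13/64 * (16/153) < ∫ x, f x ∂P := by
  set l := Fc P (a+b-1) with hl
  set i := Ic P (a+b-1) with hi
  have l0 : 0 < l := Fc_pos hP (by linarith)
  have l1 : l ≤ 1 := Fc_le_one hP _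
  have hG : 2/3 * l^2 ≤ i := G_nonneg hP _
  have hA : (1/16) * (16/153 + (4*a - 2/3)^2) ≤ ∫ x, f (x/4) ∂P := by
    apply lb_sq hP (by fun_prop)
    intro x h0 h1
    rcases H (x/4) (by linarith) (by linarith) with ⟨h, _⟩ | ⟨_, h⟩
    · convert h using 1; ring
    · linarith
  have hB : (1/4) * (16/153 + 4/9 + (-2*(2*a-1) + 2*(2*b-1)) * i + ((2*a-1)^2-(2*b-1)^2) * l
      - 4/3 * (2*b-1) + (2*b-1)^2) ≤ ∫ x, f (x/2+1/2) ∂P := by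
    have e : (1/4) * (16/153 + 4/9 + (-2*(2*a-1) + 2*(2*b-1)) * i + ((2*a-1)^2-(2*b-1)^2) * l
      - 4/3 * (2*b-1) + (2*b-1)^2) = ∫ x, ((1/4 * x^2 + ((-1/2*(2*b-1)) * x + 1/4*(2*b-1)^2))
        + ((1/4 * (-2*(2*a-1) + 2*(2*b-1))) * (ch (a+b-1) x * x)
        + (1/4 * ((2*a-1)^2-(2*b-1)^2)) * ch (a+b-1) x)) ∂P := by
      have hI : Integrable (fun x => (1/4 * (-2*(2*a-1) + 2*(2*b-1))) * (ch (a+b-1) x * x)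
          + (1/4 * ((2*a-1)^2-(2*b-1)^2)) * ch (a+b-1) x) P :=
        ((chx_int hP _).const_mul _).add ((ch_int hP _).const_mul _)
      rw [integral_add (integ hP (by fun_prop)) hI,
        integral_add ((chx_int hP _).const_mul _) ((ch_int hP _).const_mul _), quad_P hP,
        integral_const_mul, integral_const_mul]
      rw [hi, hl, Ic, Fc]; ring
    rw [e]
    apply integral_mono_ae
    · exact (integ hP (by fun_prop)).add
        (((chx_int hP _).const_mul _).add ((ch_int hP _).const_mul _))
    · exact integ hP (by fun_prop)
    · refine (ae_Icc hP).mono ?_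
      rintro x ⟨h0, h1⟩
      simp only
      rcases H (x/2+1/2) (by linarith) (by linarith) with ⟨h, h'⟩ | ⟨h, h'⟩
      · have : ch (a+b-1) x = 1 := by unfold ch; rw [if_pos (by linarith)]
        rw [this]; nlinarith
      · have : ch (a+b-1) x = 0 := by unfold ch; rw [if_neg (by linarith)]
        rw [this]; nlinarith
  rw [int_ss hP hf]
  have hC : (1/4) * (16/153 + 4/9 + (-2*(2*a-1) + 2*(2*b-1)) * (2/3*l^2)
      + ((2*a-1)^2-(2*b-1)^2) * l
      - 4/3 * (2*b-1) + (2*b-1)^2) ≤ ∫ x, f (x/2+1/2) ∂P := by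
    refine le_trans ?_ hB
    have : 0 ≤ (-2*(2*a-1) + 2*(2*b-1)) * (i - 2/3*l^2) :=
      mul_nonneg (by linarith) (by linarith)
    nlinarith
  have key : (1/4*((1/16) * (16/153 + (4*a - 2/3)^2)) + 3/4 * ((1/4) * (16/153 + 4/9
      + (-2*(2*a-1) + 2*(2*b-1)) * (2/3*l^2)
      + ((2*a-1)^2-(2*b-1)^2) * l
      - 4/3 * (2*b-1) + (2*b-1)^2)) - 13/64 * (16/153)) * (1+3*l) =
      1/4 * ((1+3*l)*a - (1+9*l+6*l^2)/6)^2 + (1+3*l)*(3/4*(1-l))*(b-(5+2*l)/6)^2 + l^3/3 := by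
    ring
  have pos : 0 < 1/4 * ((1+3*l)*a - (1+9*l+6*l^2)/6)^2
      + (1+3*l)*(3/4*(1-l))*(b-(5+2*l)/6)^2 + l^3/3 := by
    have : 0 ≤ 1 - l := by linarith
    positivity
  rw [← key] at pos
  have := pos_of_mul_pos_left pos (by linarith)
  linarith

def Strad (α : Finset ℝ) (a : ℝ) : Prop :=
  a ∈ α ∧ ∀ c ∈ α, (c < a → c + a < 1/2) ∧ (a < c → 1 < c + a)

def LBd (P : Measure ℝ) (k : ℕ) (r : ℝ) : Prop :=
  ∀ β : Finset ℝ, β.Nonempty → β.card ≤ k → r ≤ distortion P β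

lemma Strad.tri {α : Finset ℝ} {a c : ℝ} (h : Strad α a) (hc : c ∈ α) :
    (c < a ∧ c + a < 1/2) ∨ c = a ∨ (a < c ∧ 1 < c + a) := by
  rcases lt_trichotomy c a with h1 | h1 | h1
  · exact Or.inl ⟨h1, (h.2 c hc).1 h1⟩
  · exact Or.inr (Or.inl h1)
  · exact Or.inr (Or.inr ⟨h1, (h.2 c hc).2 h1⟩)

lemma Strad.ne {α : Finset ℝ} {a : ℝ} (h : Strad α a) : α.Nonempty := ⟨a, h.1⟩

/-- Case A, cylinder 21. -/
lemma A1 {P : Measure ℝ} [IsProbabilityMeasure P] (hP : SelfSimilar P) {α : Finset ℝ} {a : ℝ}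
    (h : Strad α a) (ha : a ≤ 3/8) :
    1/64 * (16/153 + ((4 - 8*a) - 2/3)^2) ≤ ∫ x, dd α (x/4/2+1/2) ∂P := by
  have := dd_cont α
  apply lb_sq hP (by fun_prop)
  intro x h0 h1
  apply le_dd h.ne
  intro c hc
  rw [show 1/64 * (x - (4-8*a))^2 = ((1 - a) - (x/4/2+1/2))^2 by ring]
  rcases h.tri hc with ⟨k1, k2⟩ | k1 | ⟨k1, k2⟩
  · apply pow_le_pow_left₀ <;> linarith
  · apply pow_le_pow_left₀ <;> linarith
  · rw [← neg_sq (x/4/2+1/2 - c)]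
    apply pow_le_pow_left₀ <;> linarith

lemma A2 {P : Measure ℝ} [IsProbabilityMeasure P] (hP : SelfSimilar P) {α : Finset ℝ} {a : ℝ}
    (h : Strad α a) (ha' : 5/16 ≤ a) :
    1/256 * (16/153 + ((5 - 16*a) - 2/3)^2) ≤ ∫ x, dd α (((x/2+1/2)/2+1/2)/4) ∂P := by
  have := dd_cont α
  apply lb_sq hP (by fun_prop)
  intro x h0 h1
  apply le_dd h.ne
  intro c hc
  rw [show 1/256 * (x - (5-16*a))^2 = ((((x/2+1/2)/2+1/2)/4) - (1/2 - a))^2 by ring]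
  rcases h.tri hc with ⟨k1, k2⟩ | k1 | ⟨k1, k2⟩
  · apply pow_le_pow_left₀ <;> linarith
  · rw [← neg_sq (((x/2+1/2)/2+1/2)/4 - c)]
    apply pow_le_pow_left₀ <;> linarith
  · rw [← neg_sq (((x/2+1/2)/2+1/2)/4 - c)]
    apply pow_le_pow_left₀ <;> linarith

lemma split1 {P : Measure ℝ} [IsProbabilityMeasure P] (hP : SelfSimilar P) (α : Finset ℝ) :
    ∫ x, dd α (x/4) ∂P = 1/4 * ∫ x, dd α (x/4/4) ∂P + 3/4 * ∫ x, dd α ((x/2+1/2)/4) ∂P := by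
  have := dd_cont α
  exact int_ss hP (f := fun x => dd α (x/4)) (by fun_prop)

lemma split12 {P : Measure ℝ} [IsProbabilityMeasure P] (hP : SelfSimilar P) (α : Finset ℝ) :
    ∫ x, dd α ((x/2+1/2)/4) ∂P = 1/4 * ∫ x, dd α ((x/4/2+1/2)/4) ∂P
      + 3/4 * ∫ x, dd α (((x/2+1/2)/2+1/2)/4) ∂P := by
  have := dd_cont α
  exact int_ss hP (f := fun x => dd α ((x/2+1/2)/4)) (by fun_prop)

lemma split2 {P : Measure ℝ} [IsProbabilityMeasure P] (hP : SelfSimilar P) (α : Finset ℝ) :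
    ∫ x, dd α (x/2+1/2) ∂P = 1/4 * ∫ x, dd α (x/4/2+1/2) ∂P
      + 3/4 * ∫ x, dd α ((x/2+1/2)/2+1/2) ∂P := by
  have := dd_cont α
  exact int_ss hP (f := fun x => dd α (x/2+1/2)) (by fun_prop)

lemma split0 {P : Measure ℝ} [IsProbabilityMeasure P] (hP : SelfSimilar P) (α : Finset ℝ) :
    distortion P α = 1/4 * ∫ x, dd α (x/4) ∂P + 3/4 * ∫ x, dd α (x/2+1/2) ∂P :=
  int_ss hP (dd_cont α)

/-- Case A: contribution of cylinders 1 and 21. -/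
lemma A12 {P : Measure ℝ} [IsProbabilityMeasure P] (hP : SelfSimilar P) {α : Finset ℝ} {a : ℝ}
    (h : Strad α a) (ha : a ≤ 3/8) :
    20/1024 * (16/153) ≤ 1/4 * ∫ x, dd α (x/4) ∂P + 3/4 * (1/4 * ∫ x, dd α (x/4/2+1/2) ∂P) := by
  have h1 := A1 hP h ha
  by_cases ha' : 5/16 ≤ a
  · have h2 := A2 hP h ha'
    have h3 := int_nonneg P α (fun x => x/4/4)
    have h4 := int_nonneg P α (fun x => (x/4/2+1/2)/4)
    rw [split1 hP, split12 hP]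
    nlinarith [sq_nonneg (a - 17/48), sq_nonneg (42 * a - 15)]
  · have h3 := int_nonneg P α (fun x => x/4)
    have : (10/3 - 5/2:ℝ)^2 ≤ ((4 - 8*a) - 2/3)^2 := by
      apply pow_le_pow_left₀ <;> linarith
    norm_num at this
    linarith

/-- all the left interval is served by `a` -/
lemma A_p0 {P : Measure ℝ} [IsProbabilityMeasure P] (hP : SelfSimilar P) {α : Finset ℝ} {a : ℝ}
    (h : Strad α a) (hp : ∀ c ∈ α, a ≤ c) :
    1/16 * (16/153 + (4*a - 2/3)^2) ≤ ∫ x, dd α (x/4) ∂P := by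
  have := dd_cont α
  apply lb_sq hP (by fun_prop)
  intro x h0 h1
  apply le_dd h.ne
  intro c hc
  rw [show 1/16 * (x - 4*a)^2 = (x/4 - a)^2 by ring]
  rcases h.tri hc with ⟨k1, k2⟩ | k1 | ⟨k1, k2⟩
  · linarith [hp c hc]
  · rw [k1]
  · nlinarith

lemma A22 {P : Measure ℝ} [IsProbabilityMeasure P] (hP : SelfSimilar P) {α : Finset ℝ} {a : ℝ}
    (h : Strad α a) (ha : a ≤ 3/8) {k : ℕ} (hk : (α.filter (fun c => a < c)).card ≤ k) {r : ℝ}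
    (hr : r ≤ 16/153) (hL : LBd P k r) :
    1/16 * r ≤ ∫ x, dd α ((x/2+1/2)/2+1/2) ∂P := by
  have hc := dd_cont α
  by_cases hne : (α.filter (fun c => a < c)).Nonempty
  · set β := (α.filter (fun c => a < c)).image (fun c => 4 * min c 1 - 3) with hβ
    have hβn : β.Nonempty := hne.image _
    have h1 : r ≤ distortion P β := hL β hβn (Finset.card_image_le.trans hk)
    have h2 : 1/16 * distortion P β ≤ ∫ x, dd α ((x/2+1/2)/2+1/2) ∂P := by
      apply lb_dd hP (by fun_prop)
      intro x h0 h1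
      apply le_dd h.ne
      intro c hc
      have mem : ∀ b ∈ α, a < b → dd β x ≤ (x - (4 * min b 1 - 3))^2 := by
        intro b hb hab
        apply dd_le
        exact Finset.mem_image.mpr ⟨b, Finset.mem_filter.mpr ⟨hb, hab⟩, rfl⟩
      by_cases hca : a < c
      · have := mem c hc hca
        refine (mul_le_mul_of_nonneg_left this (by norm_num)).trans ?_
        rw [show 1/16 * (x - (4 * min c 1 - 3))^2 = ((x/2+1/2)/2+1/2 - min c 1)^2 by ring]
        rcases le_total c 1 with h' | h'
        · rw [min_eq_left h']
        · rw [min_eq_right h']; nlinarith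
      · obtain ⟨b, hb⟩ := hne
        rw [Finset.mem_filter] at hb
        have := mem b hb.1 hb.2
        refine (mul_le_mul_of_nonneg_left this (by norm_num)).trans ?_
        rw [show 1/16 * (x - (4 * min b 1 - 3))^2 = ((x/2+1/2)/2+1/2 - min b 1)^2 by ring]
        have hb2 := (h.2 b hb.1).2 hb.2
        have m1 : min b 1 ≤ 1 := min_le_right _ _
        have m2 : 5/8 ≤ min b 1 := le_min (by linarith) (by norm_num)
        refine le_trans (b := (3/8:ℝ)^2) ?_ ?_
        · apply sq_le_sq'  <;> linarith
        · apply pow_le_pow_left₀ <;> linarith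
    linarith
  · have := lb_sq hP (g := fun x => dd α ((x/2+1/2)/2+1/2)) (by fun_prop) (1/16) (-3/2) (by
      intro x h0 h1
      apply le_dd h.ne
      intro c hc
      rw [show 1/16 * (x - (-3/2))^2 = ((x/2+1/2)/2+1/2 - 3/8)^2 by ring]
      have : c ≤ a := by
        by_contra hcon
        exact hne ⟨c, Finset.mem_filter.mpr ⟨hc, not_le.mp hcon⟩⟩
      apply pow_le_pow_left₀ <;> linarith)
    norm_num at this
    linarith

lemma A22' {P : Measure ℝ} [IsProbabilityMeasure P] (hP : SelfSimilar P) {α : Finset ℝ} {a : ℝ}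
    (h : Strad α a) (ha : a ≤ 3/8) (hk : ∀ c ∈ α, c ≤ a) :
    1/16 * (16/153 + (-3/2-2/3)^2) ≤ ∫ x, dd α ((x/2+1/2)/2+1/2) ∂P := by
  have hc := dd_cont α
  apply lb_sq hP (by fun_prop)
  intro x h0 h1
  apply le_dd h.ne
  intro c hc
  rw [show 1/16 * (x - (-3/2))^2 = ((x/2+1/2)/2+1/2 - 3/8)^2 by ring]
  have := hk c hc
  apply pow_le_pow_left₀ <;> linarith

/-- Case B -/
lemma B1 {P : Measure ℝ} [IsProbabilityMeasure P] (hP : SelfSimilar P) {α : Finset ℝ} {a : ℝ}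
    (h : Strad α a) (ha : 3/8 ≤ a) :
    1/64 * (16/153 + (0 - 2/3)^2) ≤ ∫ x, dd α ((x/2+1/2)/4) ∂P := by
  have := dd_cont α
  apply lb_sq hP (by fun_prop)
  intro x h0 h1
  apply le_dd h.ne
  intro c hc
  rw [show 1/64 * (x - 0)^2 = ((x/2+1/2)/4 - 1/8)^2 by ring]
  rcases h.tri hc with ⟨k1, k2⟩ | k1 | ⟨k1, k2⟩
  · apply pow_le_pow_left₀ <;> linarith
  · rw [← neg_sq ((x/2+1/2)/4 - c)]
    apply pow_le_pow_left₀ <;> linarith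
  · rw [← neg_sq ((x/2+1/2)/4 - c)]
    apply pow_le_pow_left₀ <;> linarith

/-- Case B, exactly one point to the left of `a`. -/
lemma B_p1 {P : Measure ℝ} [IsProbabilityMeasure P] (hP : SelfSimilar P) {α : Finset ℝ} {a c : ℝ}
    (h : Strad α a) (ha : 3/8 ≤ a) (hca : c < a) (hc : c ∈ α)
    (hu : ∀ b ∈ α, b < a → b = c) :
    65/64 * (1/16) * (16/153) ≤ ∫ x, dd α (x/4) ∂P := by
  have hcont := dd_cont α
  have hc2 := (h.2 c hc).1 hca
  have hbig : ∀ b ∈ α, b = c ∨ 3/8 ≤ b := by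
    intro b hb
    by_cases hba : b < a
    · exact Or.inl (hu b hb hba)
    · right; linarith
  rw [split1 hP]
  have h11 : 1/256 * (16/153 + (16 * (max c 0) - 2/3)^2) ≤ ∫ x, dd α (x/4/4) ∂P := by
    apply lb_sq hP (by fun_prop)
    intro x h0 h1
    apply le_dd h.ne
    intro b hb
    rw [show 1/256 * (x - 16 * max c 0)^2 = (x/4/4 - max c 0)^2 by ring]
    rcases hbig b hb with rfl | hb'
    · rcases le_total b 0 with h' | h'
      · rw [max_eq_right h']; nlinarith
      · rw [max_eq_left h']
    · rw [← neg_sq (x/4/4 - b)]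
      have m1 : 0 ≤ max c 0 := le_max_right _ _
      have m2 : max c 0 ≤ 1/8 := max_le (by linarith) (by norm_num)
      apply sq_le_sq' <;> linarith
  by_cases hc3 : 1/16 ≤ c
  · rw [max_eq_left (by linarith)] at h11
    have := B1 hP h ha
    have : (1/3:ℝ)^2 ≤ (16*c - 2/3)^2 := by apply pow_le_pow_left₀ <;> linarith
    norm_num at *
    linarith
  · have h12 : ∫ x, ((1/64) * x^2 + ((-1/256) * x + 1/256)) ∂P ≤ ∫ x, dd α ((x/2+1/2)/4) ∂P := by
      apply int_mono01 hP (by fun_prop) (by fun_prop)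
      intro x h0 h1
      apply le_dd h.ne
      intro b hb
      rcases hbig b hb with rfl | hb'
      · refine le_trans (b := ((x/2+1/2)/4 - 1/16)^2) (by nlinarith) ?_
        apply pow_le_pow_left₀ <;> linarith
      · rw [← neg_sq ((x/2+1/2)/4 - b)]
        refine le_trans (b := (3/8 - (x/2+1/2)/4)^2) (by nlinarith) ?_
        apply pow_le_pow_left₀ <;> linarith
    rw [quad_P hP] at h12
    nlinarith [sq_nonneg (16 * max c 0 - 2/3)]

lemma B2 {P : Measure ℝ} [IsProbabilityMeasure P] (hP : SelfSimilar P) {α : Finset ℝ} {a : ℝ}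
    (h : Strad α a) (ha : 3/8 ≤ a) {k : ℕ} (hk : (α.filter (fun c => a ≤ c)).card ≤ k) {r : ℝ}
    (hL : LBd P k r) :
    1/4 * r ≤ ∫ x, dd α (x/2+1/2) ∂P := by
  have hc := dd_cont α
  set β := (α.filter (fun c => a ≤ c)).image (fun c => 2 * min c 1 - 1) with hβ
  have hβn : β.Nonempty := Finset.Nonempty.image ⟨a, Finset.mem_filter.mpr ⟨h.1, le_rfl⟩⟩ _
  have h1 : r ≤ distortion P β := hL β hβn (Finset.card_image_le.trans hk)
  have h2 : 1/4 * distortion P β ≤ ∫ x, dd α (x/2+1/2) ∂P := by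
    apply lb_dd hP (by fun_prop)
    intro x h0 h1
    apply le_dd h.ne
    intro c hc
    have mem : ∀ b ∈ α, a ≤ b → dd β x ≤ (x - (2 * min b 1 - 1))^2 := by
      intro b hb hab
      apply dd_le
      exact Finset.mem_image.mpr ⟨b, Finset.mem_filter.mpr ⟨hb, hab⟩, rfl⟩
    by_cases hca : a ≤ c
    · have := mem c hc hca
      refine (mul_le_mul_of_nonneg_left this (by norm_num)).trans ?_
      rw [show 1/4 * (x - (2 * min c 1 - 1))^2 = (x/2+1/2 - min c 1)^2 by ring]
      rcases le_total c 1 with h' | h'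
      · rw [min_eq_left h']
      · rw [min_eq_right h']; nlinarith
    · have := mem a h.1 le_rfl
      refine (mul_le_mul_of_nonneg_left this (by norm_num)).trans ?_
      rw [show 1/4 * (x - (2 * min a 1 - 1))^2 = (x/2+1/2 - min a 1)^2 by ring]
      have hb2 := (h.2 c hc).1 (not_le.mp hca)
      have m1 : min a 1 ≤ 1 := min_le_right _ _
      have m3 : min a 1 ≤ a := min_le_left _ _
      have m2 : 3/8 ≤ min a 1 := le_min (by linarith) (by norm_num)
      apply sq_le_sq' <;> linarith
  linarith

lemma LBd_one {P : Measure ℝ} [IsProbabilityMeasure P] (hP : SelfSimilar P) : LBd P 1 (16/153) := by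
  intro β hβ hc
  have h1 : β.card = 1 := le_antisymm hc (Finset.card_pos.mpr hβ)
  obtain ⟨b, rfl⟩ := Finset.card_eq_one.mp h1
  have := lb_sq hP (dd_cont {b}) 1 b (by
    intro x _ _
    apply le_dd hβ
    intro c hc
    rw [Finset.mem_singleton.mp hc]; linarith)
  rw [distortion_eq]
  nlinarith [sq_nonneg (b - 2/3)]

lemma card_split (α : Finset ℝ) (a : ℝ) :
    (α.filter (fun c => c < a)).card + (α.filter (fun c => a ≤ c)).card = α.card := by
  have := Finset.card_filter_add_card_filter_not (s := α) (fun c => c < a)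
  simpa only [not_lt] using this

lemma card_gt (α : Finset ℝ) {a : ℝ} (ha : a ∈ α) :
    (α.filter (fun c => a < c)).card + 1 ≤ (α.filter (fun c => a ≤ c)).card := by
  apply Finset.card_lt_card
  rw [Finset.ssubset_iff_of_subset]
  · exact ⟨a, by simp [ha]⟩
  · intro c hc
    rw [Finset.mem_filter] at *
    exact ⟨hc.1, hc.2.le⟩

lemma strad_p0 {P : Measure ℝ} [IsProbabilityMeasure P] (hP : SelfSimilar P) {α : Finset ℝ} {a : ℝ}
    (h : Strad α a) (hp : ∀ c ∈ α, a ≤ c) : 80/1024 * (16/153) < distortion P α := by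
  have h1 := A_p0 hP h hp
  rw [split0 hP]
  by_cases ha : a ≤ 3/8
  · have h2 := A1 hP h ha
    have h3 := int_nonneg P α (fun x => (x/2+1/2)/2+1/2)
    rw [split2 hP]
    nlinarith [sq_nonneg (a - 23/84)]
  · have h3 := int_nonneg P α (fun x => x/2+1/2)
    nlinarith

lemma strad2 {P : Measure ℝ} [IsProbabilityMeasure P] (hP : SelfSimilar P) {α : Finset ℝ} {a : ℝ}
    (h : Strad α a) (hn : α.card ≤ 2) : 13/64 * (16/153) < distortion P α := by
  have c1 := card_split α a
  have c2 := card_gt α h.1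
  by_cases hp : (α.filter (fun c => c < a)).card = 0
  · have hp' : ∀ c ∈ α, a ≤ c := by
      intro c hc
      by_contra hcon
      rw [Finset.card_eq_zero, Finset.filter_eq_empty_iff] at hp
      exact hp hc (not_le.mp hcon)
    by_cases hq : (α.filter (fun c => a < c)).card = 0
    · have hα : α.card ≤ 1 := by
        rw [Finset.card_le_one_iff_subset_singleton]
        refine ⟨a, fun c hc => ?_⟩
        rw [Finset.card_eq_zero, Finset.filter_eq_empty_iff] at hq
        exact Finset.mem_singleton.mpr (le_antisymm (not_lt.mp (hq hc)) (hp' c hc))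
      have := LBd_one hP α h.ne hα
      linarith
    · have hq1 : (α.filter (fun c => a < c)).card = 1 := by omega
      obtain ⟨b, hb⟩ := Finset.card_eq_one.mp hq1
      have hb' : ∀ c ∈ α, a < c → c = b := by
        intro c hc hac
        have : c ∈ α.filter (fun c => a < c) := Finset.mem_filter.mpr ⟨hc, hac⟩
        rw [hb] at this
        exact Finset.mem_singleton.mp this
      have hbm : b ∈ α.filter (fun c => a < c) := by rw [hb]; simp
      rw [Finset.mem_filter] at hbm
      have hs := (h.2 b hbm.1).2 hbm.2
      apply special hP (dd_cont α) hbm.2 (by linarith)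
      intro x _ _
      by_cases hx : 2*x ≤ a + b
      · left
        refine ⟨le_dd h.ne fun c hc => ?_, hx⟩
        rcases (hp' c hc).eq_or_lt with rfl | hac
        · exact le_rfl
        · rw [hb' c hc hac]; nlinarith [hbm.2]
      · right
        refine ⟨le_dd h.ne fun c hc => ?_, not_le.mp hx⟩
        rcases (hp' c hc).eq_or_lt with rfl | hac
        · nlinarith [hbm.2]
        · rw [hb' c hc hac]
  · rw [split0 hP]
    by_cases ha : a ≤ 3/8
    · have hq : (α.filter (fun c => a < c)).card = 0 := by omega
      have h1 := A22' hP h ha (fun c hc => by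
        rw [Finset.card_eq_zero, Finset.filter_eq_empty_iff] at hq
        exact not_lt.mp (hq hc))
      rw [split2 hP]
      have h3 := int_nonneg P α (fun x => x/4)
      have h4 := int_nonneg P α (fun x => x/4/2+1/2)
      norm_num at h1
      linarith
    · have ha := (not_le.mp ha).le
      have hp1 : (α.filter (fun c => c < a)).card = 1 := by omega
      obtain ⟨c, hc⟩ := Finset.card_eq_one.mp hp1
      have hcm : c ∈ α.filter (fun c => c < a) := by rw [hc]; simp
      have hu : ∀ b ∈ α, b < a → b = c := by
        intro b hb hac
        have : b ∈ α.filter (fun c => c < a) := Finset.mem_filter.mpr ⟨hb, hac⟩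
        rw [hc] at this
        exact Finset.mem_singleton.mp this
      rw [Finset.mem_filter] at hcm
      have h1 := B_p1 hP h ha hcm.2 hcm.1 hu
      have h2 := B2 hP h ha (k := 1) (by omega) (LBd_one hP)
      linarith

/-- Generic straddling bound. -/
lemma strad_gen {P : Measure ℝ} [IsProbabilityMeasure P] (hP : SelfSimilar P) {α : Finset ℝ} {a : ℝ}
    (h : Strad α a) {m : ℕ} (hn : α.card ≤ m + 2) {R r r' : ℝ} (hL : LBd P m r)
    (hL' : LBd P (m+1) r') (hr : r ≤ 16/153)
    (k0 : R ≤ 80/1024 * (16/153)) (k1 : R < 20/1024 * (16/153) + 9/256 * r)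
    (k2 : R < 3/16 * r) (k3 : R < 65/64 * (1/64) * (16/153) + 3/16 * r') :
    R < distortion P α := by
  have c1 := card_split α a
  have c2 := card_gt α h.1
  by_cases hp : (α.filter (fun c => c < a)).card = 0
  · refine k0.trans_lt (strad_p0 hP h ?_)
    intro c hc
    by_contra hcon
    rw [Finset.card_eq_zero, Finset.filter_eq_empty_iff] at hp
    exact hp hc (not_le.mp hcon)
  rw [split0 hP]
  by_cases ha : a ≤ 3/8
  · have h1 := A12 hP h ha
    have h2 := A22 hP h ha (k := m) (by omega) hr hL
    rw [split2 hP]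
    linarith
  · have ha := (not_le.mp ha).le
    by_cases hp1 : (α.filter (fun c => c < a)).card = 1
    · obtain ⟨c, hc⟩ := Finset.card_eq_one.mp hp1
      have hcm : c ∈ α.filter (fun c => c < a) := by rw [hc]; simp
      have hu : ∀ b ∈ α, b < a → b = c := by
        intro b hb hac
        have : b ∈ α.filter (fun c => c < a) := Finset.mem_filter.mpr ⟨hb, hac⟩
        rw [hc] at this
        exact Finset.mem_singleton.mp this
      rw [Finset.mem_filter] at hcm
      have h1 := B_p1 hP h ha hcm.2 hcm.1 hu
      have h2 := B2 hP h ha (k := m+1) (by omega) hL'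
      linarith
    · have h2 := B2 hP h ha (k := m) (by omega) hL
      have h3 := int_nonneg P α (fun x => x/4)
      linarith

lemma strad5 {P : Measure ℝ} [IsProbabilityMeasure P] (hP : SelfSimilar P) {α : Finset ℝ} {a : ℝ}
    (h : Strad α a) : 15/1024 * (16/153) < distortion P α := by
  rw [split0 hP]
  by_cases ha : a ≤ 3/8
  · have h1 := A12 hP h ha
    have h3 := int_nonneg P α (fun x => (x/2+1/2)/2+1/2)
    rw [split2 hP]
    linarith
  · have h1 := B1 hP h (not_le.mp ha).le
    have h3 := int_nonneg P α (fun x => x/2+1/2)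
    have h4 := int_nonneg P α (fun x => x/4/4)
    rw [split1 hP]
    norm_num at *
    linarith

def NS (α : Finset ℝ) (u v : ℝ) : Prop :=
  u ∈ α ∧ v ∈ α ∧ u < v ∧ (∀ c ∈ α, c ≤ u ∨ v ≤ c) ∧ 1/2 ≤ u + v ∧ u + v ≤ 1

lemma dichotomy {α : Finset ℝ} (h : α.Nonempty) : (∃ a, Strad α a) ∨ ∃ u v, NS α u v := by
  obtain ⟨a, ha, e⟩ := dd_exists h (3/8)
  have hn : ∀ c ∈ α, (3/8 - a)^2 ≤ (3/8 - c)^2 := fun c hc => e ▸ dd_le hc _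
  by_cases hs : Strad α a
  · exact Or.inl ⟨a, hs⟩
  right
  unfold Strad at hs
  push Not at hs
  obtain ⟨c, hc, hcc⟩ := hs ha
  by_cases h1 : c < a ∧ 1/2 ≤ c + a
  · have hne : (α.filter (fun c => c < a)).Nonempty := ⟨c, Finset.mem_filter.mpr ⟨hc, h1.1⟩⟩
    set u := (α.filter (fun c => c < a)).max' hne with hu
    have hum := Finset.max'_mem _ hne
    rw [← hu, Finset.mem_filter] at hum
    have hle : ∀ b ∈ α, b < a → b ≤ u := fun b hb hba =>
      Finset.le_max' _ _ (Finset.mem_filter.mpr ⟨hb, hba⟩)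
    refine ⟨u, a, hum.1, ha, hum.2, ?_, ?_, ?_⟩
    · intro b hb
      by_cases hba : b < a
      · exact Or.inl (hle b hb hba)
      · exact Or.inr (not_lt.mp hba)
    · linarith [hle c hc h1.1]
    · have := hn u hum.1
      nlinarith [hum.2]
  · have h2 : a < c ∧ c + a ≤ 1 := by
      apply hcc
      intro hca
      by_contra hcon
      exact h1 ⟨hca, not_lt.mp hcon⟩
    have hne : (α.filter (fun c => a < c)).Nonempty := ⟨c, Finset.mem_filter.mpr ⟨hc, h2.1⟩⟩
    set v := (α.filter (fun c => a < c)).min' hne with hv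
    have hvm := Finset.min'_mem _ hne
    rw [← hv, Finset.mem_filter] at hvm
    have hle : ∀ b ∈ α, a < b → v ≤ b := fun b hb hba =>
      Finset.min'_le _ _ (Finset.mem_filter.mpr ⟨hb, hba⟩)
    refine ⟨a, v, ha, hvm.1, hvm.2, ?_, ?_, ?_⟩
    · intro b hb
      by_cases hba : a < b
      · exact Or.inr (hle b hb hba)
      · exact Or.inl (not_lt.mp hba)
    · have := hn v hvm.1
      nlinarith [hvm.2]
    · linarith [hle c hc h2.1]

def lef (α : Finset ℝ) (u : ℝ) : Finset ℝ := (α.filter (fun c => c ≤ u)).image (fun c => 4 * c)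
def rig (α : Finset ℝ) (v : ℝ) : Finset ℝ := (α.filter (fun c => v ≤ c)).image (fun c => 2 * c - 1)

def joi (β γ : Finset ℝ) : Finset ℝ := β.image S1 ∪ γ.image S2

lemma joi_dist {P : Measure ℝ} [IsProbabilityMeasure P] (hP : SelfSimilar P) {β γ : Finset ℝ}
    (hβ : β.Nonempty) (hγ : γ.Nonempty) :
    distortion P (joi β γ) ≤ 1/64 * distortion P β + 3/16 * distortion P γ := by
  have hc := dd_cont (joi β γ)
  have hcβ := dd_cont β
  have hcγ := dd_cont γ
  rw [split0 hP]
  have h1 : ∫ x, dd (joi β γ) (x/4) ∂P ≤ ∫ x, 1/16 * dd β x ∂P := by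
    apply int_mono01 hP (by fun_prop) (by fun_prop)
    intro x _ _
    obtain ⟨b, hb, e⟩ := dd_exists hβ x
    refine (dd_le (a := S1 b) ?_ _).trans ?_
    · exact Finset.mem_union_left _ (Finset.mem_image_of_mem _ hb)
    · rw [e, S1]; apply le_of_eq; ring
  have h2 : ∫ x, dd (joi β γ) (x/2+1/2) ∂P ≤ ∫ x, 1/4 * dd γ x ∂P := by
    apply int_mono01 hP (by fun_prop) (by fun_prop)
    intro x _ _
    obtain ⟨b, hb, e⟩ := dd_exists hγ x
    refine (dd_le (a := S2 b) ?_ _).trans ?_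
    · exact Finset.mem_union_right _ (Finset.mem_image_of_mem _ hb)
    · rw [e, S2]; apply le_of_eq; ring
  rw [integral_const_mul, ← distortion_eq] at h1 h2
  linarith

lemma joi_card (β γ : Finset ℝ) : (joi β γ).card ≤ β.card + γ.card :=
  (Finset.card_union_le _ _).trans (add_le_add Finset.card_image_le Finset.card_image_le)

lemma NS.lef_ne {α : Finset ℝ} {u v : ℝ} (h : NS α u v) : (lef α u).Nonempty := by
  have hm : u ∈ α.filter (fun c => c ≤ u) := Finset.mem_filter.mpr ⟨h.1, le_refl u⟩
  exact ⟨4 * u, Finset.mem_image.mpr ⟨u, hm, rfl⟩⟩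
lemma NS.rig_ne {α : Finset ℝ} {u v : ℝ} (h : NS α u v) : (rig α v).Nonempty :=
  Finset.Nonempty.image ⟨v, Finset.mem_filter.mpr ⟨h.2.1, le_rfl⟩⟩ _

lemma NS.joi_eq {α : Finset ℝ} {u v : ℝ} (h : NS α u v) : joi (lef α u) (rig α v) = α := by
  ext x
  simp only [joi, lef, rig, Finset.mem_union, Finset.mem_image, Finset.mem_filter, S1, S2]
  constructor
  · rintro (⟨_, ⟨c, ⟨hc, _⟩, rfl⟩, rfl⟩ | ⟨_, ⟨c, ⟨hc, _⟩, rfl⟩, rfl⟩)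
    · convert hc using 1; ring
    · convert hc using 1; ring
  · intro hx
    rcases h.2.2.2.1 x hx with h' | h'
    · left; exact ⟨4*x, ⟨x, ⟨hx, h'⟩, rfl⟩, by ring⟩
    · right; exact ⟨2*x-1, ⟨x, ⟨hx, h'⟩, rfl⟩, by ring⟩

lemma NS.card {α : Finset ℝ} {u v : ℝ} (h : NS α u v) :
    (lef α u).card + (rig α v).card ≤ α.card := by
  refine (add_le_add Finset.card_image_le Finset.card_image_le).trans ?_
  rw [← Finset.card_union_of_disjoint]
  · apply Finset.card_le_card
    intro x hx
    simp only [Finset.mem_union, Finset.mem_filter] at hx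
    tauto
  · rw [Finset.disjoint_left]
    intro x hx hx'
    rw [Finset.mem_filter] at hx hx'
    have := h.2.2.1
    linarith [hx.2, hx'.2]

lemma NS.dist {P : Measure ℝ} [IsProbabilityMeasure P] (hP : SelfSimilar P) {α : Finset ℝ} {u v : ℝ}
    (h : NS α u v) :
    distortion P α = 1/64 * distortion P (lef α u) + 3/16 * distortion P (rig α v) := by
  apply le_antisymm
  · have := joi_dist hP h.lef_ne h.rig_ne
    rwa [h.joi_eq] at this
  · have hc := dd_cont α
    have hne : α.Nonempty := ⟨u, h.1⟩
    obtain ⟨hu, hv, huv, hb, g1, g2⟩ := h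
    have h1 : 1/16 * distortion P (lef α u) ≤ ∫ x, dd α (x/4) ∂P := by
      apply lb_dd hP (by fun_prop)
      intro x h0 h1
      apply le_dd hne
      intro c hc
      have mem : ∀ c ∈ α, c ≤ u → 1/16 * dd (lef α u) x ≤ (x/4 - c)^2 := by
        intro c hc hcu
        have := dd_le (α := lef α u) (a := 4*c)
          (Finset.mem_image.mpr ⟨c, Finset.mem_filter.mpr ⟨hc, hcu⟩, rfl⟩) x
        nlinarith
      rcases hb c hc with h' | h'
      · exact mem c hc h'
      · refine (mem u hu le_rfl).trans ?_
        nlinarith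
    have h2 : 1/4 * distortion P (rig α v) ≤ ∫ x, dd α (x/2+1/2) ∂P := by
      apply lb_dd hP (by fun_prop)
      intro x h0 h1
      apply le_dd hne
      intro c hc
      have mem : ∀ c ∈ α, v ≤ c → 1/4 * dd (rig α v) x ≤ (x/2+1/2 - c)^2 := by
        intro c hc hcu
        have := dd_le (α := rig α v) (a := 2*c-1)
          (Finset.mem_image.mpr ⟨c, Finset.mem_filter.mpr ⟨hc, hcu⟩, rfl⟩) x
        nlinarith
      rcases hb c hc with h' | h'
      · refine (mem v hv le_rfl).trans ?_
        nlinarith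
      · exact mem c hc h'
    rw [split0 hP α]
    linarith

lemma LBd_two {P : Measure ℝ} [IsProbabilityMeasure P] (hP : SelfSimilar P) :
    LBd P 2 (13/64 * (16/153)) := by
  intro α hne hc
  rcases dichotomy hne with ⟨a, ha⟩ | ⟨u, v, h⟩
  · exact (strad2 hP ha hc).le
  · rw [h.dist hP]
    have h1 := Finset.card_pos.mpr h.lef_ne
    have h2 := Finset.card_pos.mpr h.rig_ne
    have h3 := h.card
    have h4 := LBd_one hP _ h.lef_ne (by omega)
    have h5 := LBd_one hP _ h.rig_ne (by omega)
    linarith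

lemma strad3 {P : Measure ℝ} [IsProbabilityMeasure P] (hP : SelfSimilar P) {α : Finset ℝ} {a : ℝ}
    (h : Strad α a) (hn : α.card ≤ 3) : 55/1024 * (16/153) < distortion P α :=
  strad_gen hP h (m := 1) hn (LBd_one hP) (LBd_two hP) (by norm_num) (by norm_num)
    (by norm_num) (by norm_num) (by norm_num)

lemma LBd_three {P : Measure ℝ} [IsProbabilityMeasure P] (hP : SelfSimilar P) :
    LBd P 3 (55/1024 * (16/153)) := by
  intro α hne hc
  rcases dichotomy hne with ⟨a, ha⟩ | ⟨u, v, h⟩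
  · exact (strad3 hP ha hc).le
  · rw [h.dist hP]
    have h1 := Finset.card_pos.mpr h.lef_ne
    have h2 := Finset.card_pos.mpr h.rig_ne
    have h3 := h.card
    by_cases h6 : (rig α v).card ≤ 1
    · have h5 := LBd_one hP _ h.rig_ne h6
      have h4 := dist_nonneg' P (lef α u)
      linarith
    · have h4 := LBd_one hP _ h.lef_ne (by omega)
      have h5 := LBd_two hP _ h.rig_ne (by omega)
      linarith

lemma strad4 {P : Measure ℝ} [IsProbabilityMeasure P] (hP : SelfSimilar P) {α : Finset ℝ} {a : ℝ}
    (h : Strad α a) (hn : α.card ≤ 4) : 421/16384 * (16/153) < distortion P α :=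
  strad_gen hP h (m := 2) hn (LBd_two hP) (LBd_three hP) (by norm_num) (by norm_num)
    (by norm_num) (by norm_num) (by norm_num)

def UB (P : Measure ℝ) (k : ℕ) (r : ℝ) : Prop :=
  ∃ β : Finset ℝ, β.Nonempty ∧ β.card ≤ k ∧ distortion P β ≤ r

lemma UB_one {P : Measure ℝ} [IsProbabilityMeasure P] (hP : SelfSimilar P) : UB P 1 (16/153) := by
  refine ⟨{2/3}, by simp, by simp, ?_⟩
  have h := var_P hP 1 (2/3)
  rw [distortion_eq]
  have e : ∀ x, dd {2/3} x = 1 * (x - 2/3)^2 := by intro x; simp [dd]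
  simp only [e]
  rw [h]; norm_num

lemma UB.join {P : Measure ℝ} [IsProbabilityMeasure P] (hP : SelfSimilar P) {i j n : ℕ} {r s R : ℝ}
    (h1 : UB P i r) (h2 : UB P j s) (hn : i + j ≤ n) (hR : 1/64 * r + 3/16 * s ≤ R) : UB P n R := by
  obtain ⟨β, b1, b2, b3⟩ := h1
  obtain ⟨γ, g1, g2, g3⟩ := h2
  refine ⟨joi β γ, ?_, (joi_card β γ).trans (by omega), ?_⟩
  · exact (b1.image _).mono Finset.subset_union_left
  · have := joi_dist hP b1 g1
    linarith

lemma strad_UB {P : Measure ℝ} [IsProbabilityMeasure P] (hP : SelfSimilar P) {α : Finset ℝ} {a : ℝ}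
    (h : Strad α a) {n : ℕ} (h2 : 2 ≤ n) (hn : α.card ≤ n) :
    ∃ β : Finset ℝ, β.Nonempty ∧ β.card ≤ n ∧ distortion P β < distortion P α := by
  have u1 := UB_one hP
  have u2 : UB P 2 (13/64 * (16/153)) := u1.join hP u1 (by norm_num) (by norm_num)
  have u3 : UB P 3 (55/1024 * (16/153)) := u1.join hP u2 (by norm_num) (by norm_num)
  have u4 : UB P 4 (421/16384 * (16/153)) := u1.join hP u3 (by norm_num) (by norm_num)
  have u5 : UB P 5 (15/1024 * (16/153)) := u2.join hP u3 (by norm_num) (by norm_num)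
  have fin : ∀ k r, UB P k r → k ≤ n → r < distortion P α →
      ∃ β : Finset ℝ, β.Nonempty ∧ β.card ≤ n ∧ distortion P β < distortion P α := by
    rintro k r ⟨β, b1, b2, b3⟩ hk hr
    exact ⟨β, b1, b2.trans hk, b3.trans_lt hr⟩
  rcases (by omega : n = 2 ∨ n = 3 ∨ n = 4 ∨ 5 ≤ n) with rfl | rfl | rfl | h5
  · exact fin _ _ u2 le_rfl (strad2 hP h hn)
  · exact fin _ _ u3 le_rfl (strad3 hP h hn)
  · exact fin _ _ u4 le_rfl (strad4 hP h hn)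
  · exact fin _ _ u5 h5 (strad5 hP h)

lemma Sw_affine (σ : List (Fin 2)) (x : ℝ) : Sw σ x = sw σ * x + Sw σ 0 := by
  induction σ with
  | nil => simp [Sw, sw]
  | cons i σ ih =>
    simp only [Sw, sw, Function.comp]
    rw [ih]
    split_ifs
    · unfold S1; ring
    · unfold S2; ring

lemma sw_pos (σ : List (Fin 2)) : 0 < sw σ := by
  induction σ with
  | nil => simp [sw]
  | cons i σ ih => simp only [sw]; split_ifs <;> positivity

lemma J_eq (σ : List (Fin 2)) : J σ = Icc (Sw σ 0) (sw σ + Sw σ 0) := by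
  unfold J
  have : Sw σ = fun x => sw σ * x + Sw σ 0 := funext (Sw_affine σ)
  rw [this, Set.image_affine_Icc' (sw_pos σ)]
  simp

lemma Sw_mem (σ : List (Fin 2)) {x : ℝ} (hx : x ∈ Icc (0:ℝ) 1) : Sw σ x ∈ Icc (0:ℝ) 1 := by
  induction σ with
  | nil => simpa [Sw] using hx
  | cons i σ ih =>
    simp only [Sw, Function.comp]
    split_ifs
    · unfold S1; constructor <;> linarith [ih.1, ih.2]
    · unfold S2; constructor <;> linarith [ih.1, ih.2]

lemma J_sub (σ : List (Fin 2)) : J σ ⊆ Icc (0:ℝ) 1 := by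
  rintro _ ⟨x, hx, rfl⟩; exact Sw_mem σ hx

lemma J_meas (σ : List (Fin 2)) : MeasurableSet (J σ) := by
  rw [J_eq]; exact measurableSet_Icc

lemma vol_J (σ : List (Fin 2)) : (volume (J σ)).toReal = sw σ := by
  rw [J_eq, Real.volume_Icc, ENNReal.toReal_ofReal] <;> linarith [sw_pos σ]

lemma P_null {P : Measure ℝ} [IsProbabilityMeasure P] (hP : SelfSimilar P) {A : Set ℝ}
    (h : ∀ x ∈ A, x ∉ Icc (0:ℝ) 1) : P.real A = 0 := by
  have : P A = 0 := measure_mono_null h (ae_iff.mp (ae_Icc hP))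
  simp [Measure.real, this]

lemma P_J {P : Measure ℝ} [IsProbabilityMeasure P] (hP : SelfSimilar P) (σ : List (Fin 2)) :
    P.real (J σ) = pw σ := by
  induction σ with
  | nil => simpa [J, Sw, pw] using P_Icc hP
  | cons i σ ih =>
    rw [P_apply_real hP (J_meas _)]
    by_cases hi : i = 0
    · have e : J (i :: σ) = S1 '' J σ := by
        unfold J; rw [Sw, if_pos hi, image_comp]
      have h1 : S1 ⁻¹' J (i :: σ) = J σ := by
        rw [e]; apply preimage_image_eq
        intro x y h; unfold S1 at h; linarith
      have h2 : P.real (S2 ⁻¹' J (i :: σ)) = 0 := by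
        apply P_null hP
        rintro x hx ⟨h0, _⟩
        rw [e] at hx
        obtain ⟨y, hy, hxy⟩ := hx
        have := (J_sub σ hy).2
        unfold S1 S2 at hxy
        linarith
      rw [h1, h2, ih, pw, if_pos hi]; ring
    · have e : J (i :: σ) = S2 '' J σ := by
        unfold J; rw [Sw, if_neg hi, image_comp]
      have h1 : S2 ⁻¹' J (i :: σ) = J σ := by
        rw [e]; apply preimage_image_eq
        intro x y h; unfold S2 at h; linarith
      have h2 : P.real (S1 ⁻¹' J (i :: σ)) = 0 := by
        apply P_null hP
        rintro x hx ⟨_, h0⟩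
        rw [e] at hx
        obtain ⟨y, hy, hxy⟩ := hx
        have := (J_sub σ hy).1
        unfold S1 S2 at hxy
        linarith
      rw [h1, h2, ih, pw, if_neg hi]; ring

lemma qnt_eq {P : Measure ℝ} [IsProbabilityMeasure P] (hP : SelfSimilar P) (σ : List (Fin 2)) :
    qnt P σ = pw σ * sw σ ^ 2 := by
  unfold qnt
  rw [vol_J, ← P_J hP]; rfl

lemma wt_formula (σ : List (Fin 2)) :
    pw σ * sw σ ^ 2 = (3 : ℝ) ^ (σ.length - cnt σ) / 2 ^ (4 * σ.length + 2 * cnt σ) := by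
  induction σ with
  | nil => simp [pw, sw, cnt]
  | cons i σ ih =>
    have hle : cnt σ ≤ σ.length := List.count_le_length
    by_cases hi : i = 0
    · subst hi
      have c : cnt (0 :: σ) = cnt σ + 1 := by simp [cnt]
      rw [pw, sw, if_pos rfl, if_pos rfl, c, List.length_cons,
        show σ.length + 1 - (cnt σ + 1) = σ.length - cnt σ by omega,
        show 4 * (σ.length + 1) + 2 * (cnt σ + 1) = (4 * σ.length + 2 * cnt σ) + 6 by ring,
        pow_add, ← div_div, ← ih]
      ring
    · have c : cnt (i :: σ) = cnt σ := by simp [cnt, List.count_cons, hi]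
      rw [pw, sw, if_neg hi, if_neg hi, c, List.length_cons,
        show σ.length + 1 - cnt σ = (σ.length - cnt σ) + 1 by omega,
        show 4 * (σ.length + 1) + 2 * (cnt σ) = (4 * σ.length + 2 * cnt σ) + 4 by ring,
        pow_add 2, pow_succ 3, ← div_div, mul_div_right_comm, ← ih]
      ring

def pt (σ : List (Fin 2)) : ℝ := Sw σ (2/3)

lemma pt_mem (σ : List (Fin 2)) : pt σ ∈ Icc (0:ℝ) 1 := Sw_mem σ ⟨by norm_num, by norm_num⟩

lemma pt_zero (σ : List (Fin 2)) : pt (0 :: σ) = S1 (pt σ) := by simp [pt, Sw]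
lemma pt_one (σ : List (Fin 2)) : pt (1 :: σ) = S2 (pt σ) := by simp [pt, Sw]

lemma pt_ne_third (σ : List (Fin 2)) : pt σ ≠ 1/3 := by
  rcases σ with _ | ⟨i, σ⟩
  · simp only [pt, Sw, id]; norm_num
  · have := pt_mem σ
    fin_cases i
    · change pt (0 :: σ) ≠ _
      rw [pt_zero, S1]; intro h; linarith [this.2]
    · change pt (1 :: σ) ≠ _
      rw [pt_one, S2]; intro h; linarith [this.1]

lemma pt_cons_ne (i : Fin 2) (σ : List (Fin 2)) : pt (i :: σ) ≠ pt [] := by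
  have e : pt [] = 2/3 := rfl
  rw [e]
  have := pt_mem σ
  fin_cases i
  · change pt (0 :: σ) ≠ _
    rw [pt_zero, S1]; intro h; linarith [this.2]
  · change pt (1 :: σ) ≠ _
    rw [pt_one, S2]; intro h; exact pt_ne_third σ (by linarith)

lemma pt_inj : Function.Injective pt := by
  intro σ
  induction σ with
  | nil =>
    intro τ h
    rcases τ with _ | ⟨i, τ⟩
    · rfl
    · exact absurd h.symm (pt_cons_ne i τ)
  | cons i σ ih =>
    intro τ h
    rcases τ with _ | ⟨j, τ⟩
    · exact absurd h (pt_cons_ne i σ)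
    · have m1 := pt_mem σ
      have m2 := pt_mem τ
      fin_cases i <;> fin_cases j
      · change pt (0 :: σ) = pt (0 :: τ) at h
        rw [pt_zero, pt_zero, S1, S1] at h
        rw [ih (a₂ := τ) (by linarith)]
      · change pt (0 :: σ) = pt (1 :: τ) at h
        rw [pt_zero, pt_one, S1, S2] at h
        linarith [m1.2, m2.1]
      · change pt (1 :: σ) = pt (0 :: τ) at h
        rw [pt_zero, pt_one, S1, S2] at h
        linarith [m1.1, m2.2]
      · change pt (1 :: σ) = pt (1 :: τ) at h
        rw [pt_one, pt_one, S2, S2] at h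
        rw [ih (a₂ := τ) (by linarith)]

lemma qError_le (P : Measure ℝ) {n : ℕ} {β : Finset ℝ} (h : β.Nonempty) (hc : β.card ≤ n) :
    qError P n ≤ distortion P β := by
  apply csInf_le
  · refine ⟨0, ?_⟩
    rintro _ ⟨γ, _, _, rfl⟩
    exact dist_nonneg' P γ
  · exact ⟨β, h, hc, rfl⟩

lemma opt_le {P : Measure ℝ} {n : ℕ} {α β : Finset ℝ} (hα : IsOptimal P n α) (h : β.Nonempty)
    (hc : β.card ≤ n) : distortion P α ≤ distortion P β := by
  rw [hα.2.2]; exact qError_le P h hc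

lemma opt_mk {P : Measure ℝ} {n : ℕ} {α : Finset ℝ} (h : α.Nonempty) (hc : α.card ≤ n)
    (H : ∀ β : Finset ℝ, β.Nonempty → β.card ≤ n → distortion P α ≤ distortion P β) :
    IsOptimal P n α := by
  refine ⟨h, hc, le_antisymm ?_ (qError_le P h hc)⟩
  apply le_csInf
  · exact ⟨_, α, h, hc, rfl⟩
  · rintro _ ⟨β, b1, b2, rfl⟩
    exact H β b1 b2

lemma main_struct {P : Measure ℝ} [IsProbabilityMeasure P] (hP : SelfSimilar P) (n : ℕ) :
    1 ≤ n → ∀ α : Finset ℝ, IsOptimal P n α →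
    ∃ O : Finset (List (Fin 2)), α = O.image pt ∧
      distortion P α = (∑ σ ∈ O, pw σ * sw σ ^ 2) * (16/153) := by
  induction n using Nat.strong_induction_on with
  | _ n ih =>
  intro hn α hα
  rcases hn.eq_or_lt with rfl | hn
  · obtain ⟨b, rfl⟩ := Finset.card_eq_one.mp
      (le_antisymm hα.2.1 (Finset.card_pos.mpr hα.1))
    obtain ⟨β, b1, b2, b3⟩ := UB_one hP
    have h1 := (opt_le hα b1 b2).trans b3
    have h2 : distortion P {b} = 16/153 + (b - 2/3)^2 := by
      have h := var_P hP 1 b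
      rw [distortion_eq]
      have e : ∀ x, dd {b} x = 1 * (x - b)^2 := by intro x; simp [dd]
      simp only [e]
      rw [h]; ring
    have h3 : (b - 2/3)^2 = 0 := le_antisymm (by linarith) (sq_nonneg _)
    have h4 : b = 2/3 := by
      have := pow_eq_zero_iff (two_ne_zero) |>.mp h3
      linarith
    subst h4
    refine ⟨{[]}, by simp [pt, Sw], ?_⟩
    rw [h2]; simp [pw, sw]
  · rcases dichotomy hα.1 with ⟨a, ha⟩ | ⟨u, v, h⟩
    · obtain ⟨β, b1, b2, b3⟩ := strad_UB hP ha hn hα.2.1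
      exact absurd (opt_le hα b1 b2) (not_le.mpr b3)
    · have h1 := Finset.card_pos.mpr h.lef_ne
      have h2 := Finset.card_pos.mpr h.rig_ne
      have h3 := h.card
      have h4 := hα.2.1
      have hd := h.dist hP
      have o1 : IsOptimal P (lef α u).card (lef α u) := by
        refine opt_mk h.lef_ne le_rfl fun β b1 b2 => ?_
        have k1 := joi_dist hP b1 h.rig_ne
        have k2 := opt_le hα (β := joi β (rig α v))
          ((b1.image _).mono Finset.subset_union_left) ((joi_card _ _).trans (by omega))
        linarith
      have o2 : IsOptimal P (rig α v).card (rig α v) := by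
        refine opt_mk h.rig_ne le_rfl fun β b1 b2 => ?_
        have k1 := joi_dist hP h.lef_ne b1
        have k2 := opt_le hα (β := joi (lef α u) β)
          ((h.lef_ne.image _).mono Finset.subset_union_left) ((joi_card _ _).trans (by omega))
        linarith
      obtain ⟨O1, e1, d1⟩ := ih _ (by omega) h1 _ o1
      obtain ⟨O2, e2, d2⟩ := ih _ (by omega) h2 _ o2
      refine ⟨O1.image (List.cons 0) ∪ O2.image (List.cons 1), ?_, ?_⟩
      · conv_lhs => rw [← h.joi_eq, e1, e2]
        rw [joi, Finset.image_union, Finset.image_image, Finset.image_image, Finset.image_image,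
          Finset.image_image]
        refine congrArg₂ (· ∪ ·) ?_ ?_
        · exact Finset.image_congr (fun σ _ => (pt_zero σ).symm)
        · exact Finset.image_congr (fun σ _ => (pt_one σ).symm)
      · rw [Finset.sum_union, Finset.sum_image, Finset.sum_image, hd, d1, d2]
        · simp only [pw, sw]
          simp only [if_true, one_ne_zero, if_false]
          have t1 : ∑ x ∈ O1, 1/4 * pw x * (1/4 * sw x)^2 = 1/64 * ∑ x ∈ O1, pw x * sw x ^2 := by
            rw [Finset.mul_sum]; apply Finset.sum_congr rfl; intros; ring
          have t2 : ∑ x ∈ O2, 3/4 * pw x * (1/2 * sw x)^2 = 3/16 * ∑ x ∈ O2, pw x * sw x ^2 := by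
            rw [Finset.mul_sum]; apply Finset.sum_congr rfl; intros; ring
          rw [t1, t2]; ring
        · intro x _ y _ hxy; exact (List.cons.inj hxy).2
        · intro x _ y _ hxy; exact (List.cons.inj hxy).2
        · rw [Finset.disjoint_left]
          intro x hx hx'
          obtain ⟨y, _, rfl⟩ := Finset.mem_image.mp hx
          obtain ⟨z, _, hz⟩ := Finset.mem_image.mp hx'
          have := (List.cons.inj hz).1
          exact absurd this (by decide)

theorem stmt_18 (P : Measure ℝ) [IsProbabilityMeasure P] (hP : SelfSimilar P)
    (n : ℕ) (hn : 2 ≤ n) (α : Finset ℝ) (hα : IsOptimal P n α)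
    (O : Finset (List (Fin 2))) (hO : ∀ σ : List (Fin 2), σ ∈ O ↔ Sw σ (2 / 3) ∈ α) :
    qError P n = (∑ σ ∈ O, qnt P σ) * (16 / 153) ∧
    qError P n =
      (∑ σ ∈ O, (3 : ℝ) ^ (σ.length - cnt σ) / 2 ^ (4 * σ.length + 2 * cnt σ)) *
        (16 / 153) := by
  obtain ⟨O', e, d⟩ := main_struct hP n (by omega) α hα
  have hOO : O = O' := by
    ext σ
    rw [hO, e, Finset.mem_image]
    constructor
    · rintro ⟨τ, hτ, h⟩
      rwa [← pt_inj h]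
    · intro h
      exact ⟨σ, h, rfl⟩
  subst hOO
  rw [← hα.2.2, d]
  refine ⟨?_, ?_⟩
  · simp only [qnt_eq hP]
  · simp only [wt_formula]
end
end

section
/- Let α_n be an optimal set of n-means for P with index set O_n = {σ : S_σ(2/3) ∈ α_n}, and let τ ∈ O_n maximize P(J_τ)·λ(J_τ)² over O_n. Then the set α_{n+1}(τ) := {S_σ(2/3) : σ ∈ O_n \ {τ}} ∪ {S_{τ1}(2/3), S_{τ2}(2/3)} is an optimal set of (n+1)-means for P. -/
open MeasureTheory Set
open scoped ENNReal Classical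

noncomputable section

namespace QZ

lemma measurable_S1 : Measurable S1 := by unfold S1; fun_prop
lemma measurable_S2 : Measurable S2 := by unfold S2; fun_prop

lemma apply_split {P : Measure ℝ} (hP : SelfSimilar P) {A : Set ℝ} (hA : MeasurableSet A) :
    P A = (1/4 : ℝ≥0∞) * P (S1 ⁻¹' A) + (3/4 : ℝ≥0∞) * P (S2 ⁻¹' A) := by
  conv_lhs => rw [hP]
  simp [Measure.map_apply measurable_S1 hA, Measure.map_apply measurable_S2 hA]

lemma quarter_sum (z : ℝ≥0∞) : (1/4 : ℝ≥0∞) * z + (3/4 : ℝ≥0∞) * z = z := by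
  rw [← add_mul, ENNReal.div_add_div_same]
  norm_num
  rw [ENNReal.div_self (by norm_num) (by norm_num), one_mul]

lemma le_of_split {P : Measure ℝ} (hP : SelfSimilar P) {A B : Set ℝ} (hA : MeasurableSet A)
    (h1 : S1 ⁻¹' A ⊆ B) (h2 : S2 ⁻¹' A ⊆ B) : P A ≤ P B := by
  rw [apply_split hP hA]
  calc _ ≤ (1/4 : ℝ≥0∞) * P B + (3/4 : ℝ≥0∞) * P B := by gcongr
    _ = _ := quarter_sum _

lemma null_of_pow {P : Measure ℝ} [IsProbabilityMeasure P] (B : ℕ → Set ℝ)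
    (hm : ∀ k, MeasurableSet (B k)) (ha : Antitone B) (he : ⋂ k, B k = ∅)
    (hle : ∀ k, P (B 0) ≤ P (B k)) : P (B 0) = 0 := by
  have h := tendsto_measure_iInter_atTop (μ := P) (s := B) (fun k => (hm k).nullMeasurableSet) ha
    ⟨0, measure_ne_top _ _⟩
  rw [he, measure_empty] at h
  exact le_antisymm (ge_of_tendsto' h hle) bot_le

lemma two_pow_big (s x : ℝ) (hs : 0 < s) : ∃ k : ℕ, x < 2 ^ k * s := by
  obtain ⟨k, hk⟩ := pow_unbounded_of_one_lt (x / s) (by norm_num : (1:ℝ) < 2)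
  exact ⟨k, by rwa [div_lt_iff₀ hs] at hk⟩

lemma null_right {P : Measure ℝ} [IsProbabilityMeasure P] (hP : SelfSimilar P) {s : ℝ} (hs : 0 < s) :
    P (Ioi (1 + s)) = 0 := by
  have hstep : ∀ s > 0, P (Ioi (1 + s)) ≤ P (Ioi (1 + 2 * s)) := by
    intro s hs
    refine le_of_split hP measurableSet_Ioi ?_ ?_
    · intro x hx; simp only [mem_preimage, mem_Ioi, S1] at *; linarith
    · intro x hx; simp only [mem_preimage, mem_Ioi, S2] at *; linarith
  have := null_of_pow (P := P) (fun k => Ioi (1 + 2 ^ k * s)) (fun k => measurableSet_Ioi) ?_ ?_ ?_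
  · simpa using this
  · intro i j hij x hx
    simp only [mem_Ioi] at *
    have : (2:ℝ) ^ i ≤ 2 ^ j := pow_le_pow_right₀ (by norm_num) hij
    nlinarith
  · ext x
    simp only [mem_iInter, mem_Ioi, mem_empty_iff_false, iff_false, not_forall, not_lt]
    obtain ⟨k, hk⟩ := two_pow_big s x hs
    exact ⟨k, by linarith⟩
  · intro k
    induction k with
    | zero => exact le_rfl
    | succ k ih =>
      refine ih.trans ((hstep _ (by positivity)).trans (le_of_eq ?_))
      congr 2; ring

lemma null_left {P : Measure ℝ} [IsProbabilityMeasure P] (hP : SelfSimilar P) {s : ℝ} (hs : 0 < s) :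
    P (Iio (-s)) = 0 := by
  have hstep : ∀ s > 0, P (Iio (-s)) ≤ P (Iio (-(2 * s))) := by
    intro s hs
    refine le_of_split hP measurableSet_Iio ?_ ?_
    · intro x hx; simp only [mem_preimage, mem_Iio, S1] at *; linarith
    · intro x hx; simp only [mem_preimage, mem_Iio, S2] at *; linarith
  have := null_of_pow (P := P) (fun k => Iio (-(2 ^ k * s))) (fun k => measurableSet_Iio) ?_ ?_ ?_
  · simpa using this
  · intro i j hij x hx
    simp only [mem_Iio] at *
    have : (2:ℝ) ^ i ≤ 2 ^ j := pow_le_pow_right₀ (by norm_num) hij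
    nlinarith
  · ext x
    simp only [mem_iInter, mem_Iio, mem_empty_iff_false, iff_false, not_forall, not_lt]
    obtain ⟨k, hk⟩ := two_pow_big s (-x) hs
    exact ⟨k, by linarith⟩
  · intro k
    induction k with
    | zero => exact le_rfl
    | succ k ih =>
      refine ih.trans ((hstep _ (by positivity)).trans (le_of_eq ?_))
      congr 2; ring

lemma supp {P : Measure ℝ} [IsProbabilityMeasure P] (hP : SelfSimilar P) :
    ∀ᵐ x ∂P, x ∈ Icc (0:ℝ) 1 := by
  have h1 : ∀ᵐ x ∂P, ∀ k : ℕ, ¬ (1 + 1 / ((k:ℝ) + 1) < x) := by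
    rw [ae_all_iff]; intro k
    have := null_right hP (s := 1 / ((k:ℝ) + 1)) (by positivity)
    exact measure_eq_zero_iff_ae_notMem.1 this
  have h2 : ∀ᵐ x ∂P, ∀ k : ℕ, ¬ (x < - (1 / ((k:ℝ) + 1))) := by
    rw [ae_all_iff]; intro k
    have := null_left hP (s := 1 / ((k:ℝ) + 1)) (by positivity)
    exact measure_eq_zero_iff_ae_notMem.1 this
  filter_upwards [h1, h2] with x hx1 hx2
  constructor
  · by_contra h
    obtain ⟨k, hk⟩ := exists_nat_one_div_lt (show 0 < -x by linarith)
    exact hx2 k (by linarith)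
  · by_contra h
    obtain ⟨k, hk⟩ := exists_nat_one_div_lt (show 0 < x - 1 by linarith)
    exact hx1 k (by linarith)

section
variable {P : Measure ℝ} [IsProbabilityMeasure P]

lemma integ (hP : SelfSimilar P) {f : ℝ → ℝ} (hf : Continuous f) : Integrable f P := by
  obtain ⟨C, hC⟩ := isCompact_Icc.exists_bound_of_continuousOn (s := Icc (0:ℝ) 1) hf.continuousOn
  refine Integrable.of_bound hf.aestronglyMeasurable C ?_
  filter_upwards [supp hP] with x hx using hC x hx

lemma mono (hP : SelfSimilar P) {f g : ℝ → ℝ} (hf : Continuous f) (hg : Continuous g)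
    (h : ∀ x, 0 ≤ x → x ≤ 1 → f x ≤ g x) : ∫ x, f x ∂P ≤ ∫ x, g x ∂P := by
  refine integral_mono_ae (integ hP hf) (integ hP hg) ?_
  filter_upwards [supp hP] with x hx using h x hx.1 hx.2

lemma split (hP : SelfSimilar P) {f : ℝ → ℝ} (hf : Continuous f) :
    ∫ x, f x ∂P = 1/4 * ∫ x, f (x/4) ∂P + 3/4 * ∫ x, f (x/2+1/2) ∂P := by
  have c1 : Continuous fun x : ℝ => f (x/4) := by fun_prop
  have c2 : Continuous fun x : ℝ => f (x/2+1/2) := by fun_prop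
  have i1 : Integrable f (P.map S1) :=
    (integrable_map_measure hf.aestronglyMeasurable measurable_S1.aemeasurable).2 (integ hP c1)
  have i2 : Integrable f (P.map S2) :=
    (integrable_map_measure hf.aestronglyMeasurable measurable_S2.aemeasurable).2 (integ hP c2)
  conv_lhs => rw [hP]
  rw [integral_add_measure (i1.smul_measure (by simp)) (i2.smul_measure (by
    exact ENNReal.div_ne_top (by simp) (by simp))),
    integral_smul_measure, integral_smul_measure,
    integral_map measurable_S1.aemeasurable hf.aestronglyMeasurable,
    integral_map measurable_S2.aemeasurable hf.aestronglyMeasurable]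
  simp [S1, S2]

lemma quad0 (hP : SelfSimilar P) (A B C : ℝ) : ∫ x, (A + B * x + C * x ^ 2) ∂P
    = A + B * ∫ x, x ∂P + C * ∫ x, x ^ 2 ∂P := by
  rw [integral_add (integ hP (by fun_prop)) (integ hP (by fun_prop)),
    integral_add (integ hP (by fun_prop)) (integ hP (by fun_prop)), integral_const_mul,
    integral_const_mul]
  simp

lemma mean (hP : SelfSimilar P) : ∫ x, x ∂P = 2/3 := by
  have h := split hP (f := fun x => x) continuous_id
  have h1 := quad0 hP 0 (1/4) 0
  have h2 := quad0 hP (1/2) (1/2) 0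
  have e1 : ∫ x : ℝ, x/4 ∂P = ∫ x : ℝ, (0 + (1/4) * x + 0 * x^2) ∂P := by congr 1; ext x; ring
  have e2 : ∫ x : ℝ, (x/2+1/2) ∂P = ∫ x : ℝ, ((1/2) + (1/2) * x + 0 * x^2) ∂P := by
    congr 1; ext x; ring
  rw [e1, e2, h1, h2] at h
  linarith

lemma mom2 (hP : SelfSimilar P) : ∫ x, x ^ 2 ∂P = 28/51 := by
  have h := split hP (f := fun x => x ^ 2) (by fun_prop)
  have h1 := quad0 hP 0 0 (1/16)
  have h2 := quad0 hP (1/4) (1/2) (1/4)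
  have e1 : ∫ x : ℝ, (x/4)^2 ∂P = ∫ x : ℝ, (0 + 0 * x + (1/16) * x^2) ∂P := by
    congr 1; ext x; ring
  have e2 : ∫ x : ℝ, (x/2+1/2)^2 ∂P = ∫ x : ℝ, ((1/4) + (1/2) * x + (1/4) * x^2) ∂P := by
    congr 1; ext x; ring
  rw [e1, e2, h1, h2, mean hP] at h
  linarith

lemma quad (hP : SelfSimilar P) (A B : ℝ) : ∫ x, (A + B * x) ^ 2 ∂P
    = A ^ 2 + 4/3 * A * B + 28/51 * B ^ 2 := by
  have : ∫ x, (A + B * x) ^ 2 ∂P = ∫ x, (A^2 + (2*A*B) * x + B^2 * x ^ 2) ∂P := by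
    congr 1; ext x; ring
  rw [this, quad0 hP, mean hP, mom2 hP]; ring

lemma lin (hP : SelfSimilar P) (A B : ℝ) : ∫ x, (A + B * x) ∂P = A + 2/3 * B := by
  have : ∫ x, (A + B * x) ∂P = ∫ x, (A + B * x + 0 * x ^ 2) ∂P := by
    congr 1; ext x; ring
  rw [this, quad0 hP, mean hP]; ring

/-- minimal squared distance -/
def d (α : Finset ℝ) (x : ℝ) : ℝ := sInf ((fun a => (x - a) ^ 2) '' (α : Set ℝ))

lemma d_le {α : Finset ℝ} {a : ℝ} (ha : a ∈ α) (x : ℝ) : d α x ≤ (x - a) ^ 2 :=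
  csInf_le ⟨0, by rintro _ ⟨b, _, rfl⟩; positivity⟩ ⟨a, ha, rfl⟩

lemma le_d {α : Finset ℝ} (hα : α.Nonempty) {x g : ℝ} (h : ∀ a ∈ α, g ≤ (x - a) ^ 2) : g ≤ d α x :=
  le_csInf (hα.to_set.image _) (by rintro _ ⟨b, hb, rfl⟩; exact h b hb)

lemma d_eq {α : Finset ℝ} (hα : α.Nonempty) : d α = fun x => α.inf' hα (fun a => (x - a) ^ 2) := by
  funext x
  apply le_antisymm
  · exact Finset.le_inf' _ _ (fun a ha => d_le ha x)
  · exact le_d hα (fun a ha => Finset.inf'_le _ ha)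

lemma d_cont {α : Finset ℝ} (hα : α.Nonempty) : Continuous (d α) := by
  rw [d_eq hα]
  exact Continuous.finset_inf'_apply hα (fun a _ => by fun_prop)

/-- average of `d` over an affine copy -/
def e (P : Measure ℝ) (α : Finset ℝ) (u v : ℝ) : ℝ := ∫ x, d α (u + v * x) ∂P

lemma dist_eq {P : Measure ℝ} (α : Finset ℝ) : distortion P α = e P α 0 1 := by
  simp [distortion, e, d]

lemma e_cont {α : Finset ℝ} (hα : α.Nonempty) (u v : ℝ) : Continuous fun x => d α (u + v * x) :=
  (d_cont hα).comp (by fun_prop)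

lemma e_split (hP : SelfSimilar P) {α : Finset ℝ} (hα : α.Nonempty) (u v : ℝ) :
    e P α u v = 1/4 * e P α u (v/4) + 3/4 * e P α (u + v/2) (v/2) := by
  unfold e
  rw [split hP (e_cont hα u v)]
  congr 3 <;> (funext x; congr 1; ring)

lemma e_quad (hP : SelfSimilar P) {α : Finset ℝ} (hα : α.Nonempty) (u v A B : ℝ)
    (h : ∀ x, 0 ≤ x → x ≤ 1 → ∀ p ∈ α, (A + B * x) ^ 2 ≤ (u + v * x - p) ^ 2) :
    A ^ 2 + 4/3 * A * B + 28/51 * B ^ 2 ≤ e P α u v := by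
  rw [← quad hP]
  exact mono hP (by fun_prop) (e_cont hα u v) (fun x h0 h1 => le_d hα (h x h0 h1))

lemma e_set (hP : SelfSimilar P) {α β : Finset ℝ} (hα : α.Nonempty) (hβ : β.Nonempty)
    (u v : ℝ) (hv : 0 < v)
    (h : ∀ x, 0 ≤ x → x ≤ 1 → ∀ p ∈ α, ∃ q ∈ β, (u + v * x - q) ^ 2 ≤ (u + v * x - p) ^ 2) :
    v ^ 2 * distortion P (β.image (fun p => (p - u) / v)) ≤ e P α u v := by
  rw [dist_eq]
  unfold e
  rw [← integral_const_mul]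
  have hne : (β.image (fun p => (p - u) / v)).Nonempty := hβ.image _
  refine mono hP (continuous_const.mul (e_cont hne _ _)) (e_cont hα u v) (fun x h0 h1 => le_d hα ?_)
  intro p hp
  obtain ⟨q, hq, hqp⟩ := h x h0 h1 p hp
  refine le_trans ?_ hqp
  have := d_le (Finset.mem_image_of_mem (fun p => (p - u) / v) hq) (0 + 1 * x)
  calc _ ≤ v ^ 2 * (0 + 1 * x - (q - u) / v) ^ 2 := by gcongr
    _ = _ := by field_simp; ring

lemma e_nonneg {P : Measure ℝ} (α : Finset ℝ) (u v : ℝ) : 0 ≤ e P α u v := by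
  refine integral_nonneg (fun x => Real.sInf_nonneg ?_)
  rintro _ ⟨b, _, rfl⟩
  positivity


end


/-- binary trees, encoding cylinder partitions -/
inductive T : Type
  | L : T
  | N : T → T → T

/-- number of leaves -/
def T.sz : T → ℕ
  | .L => 1
  | .N a b => a.sz + b.sz

/-- normalized cost -/
def T.cost : T → ℝ
  | .L => 1
  | .N a b => 1/64 * a.cost + 3/16 * b.cost

/-- centres -/
def T.pts : T → Finset ℝ
  | .L => {2/3}
  | .N a b => a.pts.image S1 ∪ b.pts.image S2

/-- leaf words -/
def T.words : T → Finset (List (Fin 2))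
  | .L => {[]}
  | .N a b => a.words.image (List.cons 0) ∪ b.words.image (List.cons 1)

/-- `p_σ s_σ²` -/
def q : List (Fin 2) → ℝ
  | [] => 1
  | i :: σ => (if i = 0 then (1:ℝ)/64 else 3/16) * q σ

lemma T.sz_pos (t : T) : 1 ≤ t.sz := by
  induction t with
  | L => simp [T.sz]
  | N a b iha ihb => simp [T.sz]; omega

lemma T.cost_pos (t : T) : 0 < t.cost := by
  induction t with
  | L => simp [T.cost]
  | N a b iha ihb => simp only [T.cost]; positivity

lemma T.cost_le_one (t : T) : t.cost ≤ 1 := by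
  induction t with
  | L => simp [T.cost]
  | N a b iha ihb => simp only [T.cost]; linarith

lemma T.sz_one {t : T} (h : t.sz ≤ 1) : t = .L := by
  cases t with
  | L => rfl
  | N a b => have := a.sz_pos; have := b.sz_pos; simp [T.sz] at h; omega

lemma T.cost_two {t : T} (h : t.sz ≤ 2) : 13/64 ≤ t.cost := by
  cases t with
  | L => norm_num [T.cost]
  | N a b =>
    have := a.sz_pos; have := b.sz_pos
    simp only [T.sz] at h
    rw [T.sz_one (t := a) (by omega), T.sz_one (t := b) (by omega)]
    norm_num [T.cost]

lemma T.cost_three {t : T} (h : t.sz ≤ 3) : 55/1024 ≤ t.cost := by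
  cases t with
  | L => norm_num [T.cost]
  | N a b =>
    have := a.sz_pos; have := b.sz_pos
    simp only [T.sz] at h
    by_cases h1 : a.sz ≤ 1
    · rw [T.sz_one h1]
      have := T.cost_two (t := b) (by omega)
      simp only [T.cost]; linarith
    · rw [T.sz_one (t := b) (by omega)]
      have := a.cost_pos
      simp only [T.cost]; linarith

lemma T.grow1 (t : T) : ∃ t' : T, t'.sz = t.sz + 1 ∧ t'.cost < t.cost := by
  induction t with
  | L => exact ⟨.N .L .L, by simp [T.sz], by norm_num [T.cost]⟩
  | N a b iha ihb =>
    obtain ⟨a', h1, h2⟩ := iha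
    exact ⟨.N a' b, by simp [T.sz, h1]; omega, by simp only [T.cost]; linarith⟩

lemma T.grow (t : T) (n : ℕ) (h : t.sz ≤ n) : ∃ t' : T, t'.sz = n ∧ t'.cost ≤ t.cost := by
  induction n, h using Nat.le_induction with
  | base => exact ⟨t, rfl, le_rfl⟩
  | succ n hn ih =>
    obtain ⟨t', h1, h2⟩ := ih
    obtain ⟨t'', h3, h4⟩ := t'.grow1
    exact ⟨t'', by omega, by linarith⟩

lemma T.grow_lt (t : T) (n : ℕ) (h : t.sz < n) : ∃ t' : T, t'.sz = n ∧ t'.cost < t.cost := by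
  obtain ⟨t', h1, h2⟩ := t.grow1
  obtain ⟨t'', h3, h4⟩ := t'.grow n (by omega)
  exact ⟨t'', h3, by linarith⟩

lemma T.shrink (t' : T) (h : 2 ≤ t'.sz) :
    ∃ t'' : T, t''.sz + 1 = t'.sz ∧ t''.cost ≤ t'.cost + 51/64 := by
  induction t' with
  | L => simp [T.sz] at h
  | N a b iha ihb =>
    by_cases ha : 2 ≤ a.sz
    · obtain ⟨a', h1, h2⟩ := iha ha
      exact ⟨.N a' b, by simp [T.sz]; omega, by simp only [T.cost]; linarith⟩
    by_cases hb : 2 ≤ b.sz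
    · obtain ⟨b', h1, h2⟩ := ihb hb
      exact ⟨.N a b', by simp [T.sz]; omega, by simp only [T.cost]; linarith⟩
    have := a.sz_pos; have := b.sz_pos
    rw [T.sz_one (t := a) (by omega), T.sz_one (t := b) (by omega)]
    exact ⟨.L, by simp [T.sz], by norm_num [T.cost]⟩

lemma T.greedy (t : T) : ∀ (t' : T) (M : ℝ), (∀ σ ∈ t.words, q σ ≤ M) → t.sz < t'.sz →
    ∃ t'' : T, t''.sz + 1 = t'.sz ∧ t''.cost ≤ t'.cost + 51/64 * M := by
  induction t with
  | L =>
    intro t' M hM h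
    obtain ⟨t'', h1, h2⟩ := t'.shrink (by simp [T.sz] at h; omega)
    have := hM [] (by simp [T.words])
    simp only [q] at this
    exact ⟨t'', h1, by linarith⟩
  | N a b iha ihb =>
    intro t' M hM h
    cases t' with
    | L => have := a.sz_pos; have := b.sz_pos; simp [T.sz] at h; omega
    | N a' b' =>
      simp only [T.sz] at h
      by_cases hlt : a.sz < a'.sz
      · obtain ⟨a'', h1, h2⟩ := iha a' (64 * M) (fun σ hσ => by
          have := hM (0 :: σ) (by simp [T.words, hσ])
          simp [q] at this; linarith) hlt
        exact ⟨.N a'' b', by simp [T.sz]; omega, by simp only [T.cost]; linarith⟩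
      · obtain ⟨b'', h1, h2⟩ := ihb b' (16/3 * M) (fun σ hσ => by
          have := hM (1 :: σ) (by simp [T.words, hσ])
          simp [q] at this; linarith) (by omega)
        exact ⟨.N a' b'', by simp [T.sz]; omega, by simp only [T.cost]; linarith⟩

lemma T.split_leaf (t : T) : ∀ τ ∈ t.words, ∃ t' : T, t'.sz = t.sz + 1 ∧
    t'.cost = t.cost - 51/64 * q τ ∧
    ∀ σ, σ ∈ t'.words ↔ ((σ ∈ t.words ∧ σ ≠ τ) ∨ σ = τ ++ [0] ∨ σ = τ ++ [1]) := by
  induction t with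
  | L =>
    intro τ hτ
    simp only [T.words, Finset.mem_singleton] at hτ
    subst hτ
    refine ⟨.N .L .L, by simp [T.sz], by norm_num [T.cost, q], ?_⟩
    intro σ
    simp [T.words]
  | N a b iha ihb =>
    intro τ hτ
    simp only [T.words, Finset.mem_union, Finset.mem_image] at hτ
    rcases hτ with ⟨τ', hτ', rfl⟩ | ⟨τ', hτ', rfl⟩
    · obtain ⟨a', h1, h2, h3⟩ := iha τ' hτ'
      refine ⟨.N a' b, by simp [T.sz]; omega, by simp [T.cost, q, h2]; ring, ?_⟩
      intro σ
      rcases σ with _ | ⟨i, σ⟩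
      · simp [T.words]
      · fin_cases i <;> simp [T.words, h3]
    · obtain ⟨b', h1, h2, h3⟩ := ihb τ' hτ'
      refine ⟨.N a b', by simp [T.sz]; omega, by simp [T.cost, q, h2]; ring, ?_⟩
      intro σ
      rcases σ with _ | ⟨i, σ⟩
      · simp [T.words]
      · fin_cases i <;> simp [T.words, h3]

lemma Sw_mem (σ : List (Fin 2)) : 0 < Sw σ (2/3) ∧ Sw σ (2/3) < 1 := by
  induction σ with
  | nil => simp [Sw]; norm_num
  | cons i σ ih =>
    fin_cases i <;> simp [Sw, S1, S2] <;> constructor <;> linarith [ih.1, ih.2]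

lemma T.pts_eq (t : T) : t.pts = t.words.image (fun σ => Sw σ (2/3)) := by
  induction t with
  | L => simp [T.pts, T.words, Sw]
  | N a b iha ihb =>
    ext x
    simp only [T.pts, T.words, iha, ihb, Finset.mem_union, Finset.mem_image]
    constructor
    · rintro (⟨_, ⟨σ, hσ, rfl⟩, rfl⟩ | ⟨_, ⟨σ, hσ, rfl⟩, rfl⟩)
      · exact ⟨0 :: σ, Or.inl ⟨σ, hσ, rfl⟩, by simp [Sw]⟩
      · exact ⟨1 :: σ, Or.inr ⟨σ, hσ, rfl⟩, by simp [Sw]⟩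
    · rintro ⟨_, ⟨σ, hσ, rfl⟩ | ⟨σ, hσ, rfl⟩, rfl⟩
      · exact Or.inl ⟨_, ⟨σ, hσ, rfl⟩, by simp [Sw]⟩
      · exact Or.inr ⟨_, ⟨σ, hσ, rfl⟩, by simp [Sw]⟩

lemma Sw_inj : ∀ σ ρ : List (Fin 2), Sw σ (2/3) = Sw ρ (2/3) → σ = ρ := by
  have key : ∀ σ : List (Fin 2), Sw σ (2/3) ≠ 1/3 := by
    intro σ
    rcases σ with _ | ⟨i, σ⟩
    · simp [Sw]; norm_num
    · have := Sw_mem σ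
      fin_cases i <;> simp [Sw, S1, S2] <;> intro h <;> linarith [this.1, this.2]
  have key2 : ∀ i σ, Sw (i :: σ) (2/3) ≠ 2/3 := by
    intro i σ
    have := Sw_mem σ
    fin_cases i
    · simp [Sw, S1]; intro h; linarith
    · simp [Sw, S2]; intro h; exact key σ (by linarith)
  intro σ
  induction σ with
  | nil =>
    intro ρ h
    rcases ρ with _ | ⟨j, ρ⟩
    · rfl
    · exact absurd h.symm (key2 j ρ)
  | cons i σ ih =>
    intro ρ h
    rcases ρ with _ | ⟨j, ρ⟩
    · exact absurd h (key2 i σ)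
    · have := Sw_mem σ
      have := Sw_mem ρ
      fin_cases i <;> fin_cases j <;> simp [Sw, S1, S2] at h ⊢
      · exact ih ρ h
      · linarith
      · linarith
      · exact ih ρ h

lemma T.pts_mem {t : T} {x : ℝ} (hx : x ∈ t.pts) : 0 < x ∧ x < 1 := by
  rw [t.pts_eq, Finset.mem_image] at hx
  obtain ⟨σ, _, rfl⟩ := hx
  exact Sw_mem σ

lemma T.pts_ne (t : T) : t.pts.Nonempty := by
  induction t with
  | L => simp [T.pts]
  | N a b iha ihb => exact (iha.image _).mono Finset.subset_union_left

lemma T.pts_card (t : T) : t.pts.card ≤ t.sz := by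
  induction t with
  | L => simp [T.pts, T.sz]
  | N a b iha ihb =>
    simp only [T.pts, T.sz]
    refine (Finset.card_union_le _ _).trans ?_
    have h1 := Finset.card_image_le (s := a.pts) (f := S1)
    have h2 := Finset.card_image_le (s := b.pts) (f := S2)
    omega

section
variable {P : Measure ℝ} [IsProbabilityMeasure P]

lemma dist_single (hP : SelfSimilar P) (a : ℝ) :
    distortion P {a} = 16/153 + (a - 2/3) ^ 2 := by
  have : distortion P {a} = ∫ x, (-a + 1 * x) ^ 2 ∂P := by
    unfold distortion
    congr 1; ext x; simp; ring
  rw [this, quad hP]; ring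

lemma T.upper (hP : SelfSimilar P) (t : T) : distortion P t.pts ≤ t.cost * (16/153) := by
  induction t with
  | L => simp only [T.pts, T.cost]; rw [dist_single hP]; norm_num
  | N a b iha ihb =>
    have hne := (T.N a b).pts_ne
    rw [dist_eq, e_split hP hne]
    have h1 : e P (T.N a b).pts 0 (1/4) ≤ 1/16 * distortion P a.pts := by
      rw [dist_eq]; unfold e
      rw [← integral_const_mul]
      refine mono hP (e_cont hne _ _) (continuous_const.mul (e_cont a.pts_ne _ _)) ?_
      intro x _ _
      have : 16 * d (T.N a b).pts (0 + 1/4 * x) ≤ d a.pts (0 + 1 * x) := by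
        refine le_d a.pts_ne (fun p hp => ?_)
        have := d_le (α := (T.N a b).pts) (a := S1 p)
          (by simp only [T.pts, Finset.mem_union, Finset.mem_image]; exact Or.inl ⟨p, hp, rfl⟩)
          (0 + 1/4 * x)
        unfold S1 at this
        nlinarith
      linarith
    have h2 : e P (T.N a b).pts (0+1/2) (1/2) ≤ 1/4 * distortion P b.pts := by
      rw [dist_eq]; unfold e
      rw [← integral_const_mul]
      refine mono hP (e_cont hne _ _) (continuous_const.mul (e_cont b.pts_ne _ _)) ?_
      intro x _ _
      have : 4 * d (T.N a b).pts (0+1/2 + 1/2 * x) ≤ d b.pts (0 + 1 * x) := by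
        refine le_d b.pts_ne (fun p hp => ?_)
        have := d_le (α := (T.N a b).pts) (a := S2 p)
          (by simp only [T.pts, Finset.mem_union, Finset.mem_image]; exact Or.inr ⟨p, hp, rfl⟩)
          (0+1/2 + 1/2 * x)
        unfold S2 at this
        nlinarith
      linarith
    simp only [T.cost]
    linarith

/-! measure of cylinders -/

lemma J_subset (σ : List (Fin 2)) : J σ ⊆ Icc 0 1 := by
  rintro _ ⟨x, hx, rfl⟩
  induction σ with
  | nil => simpa [Sw] using hx
  | cons i σ ih =>
    have h1 := ih.1; have h2 := ih.2
    fin_cases i <;> simp [Sw, S1, S2] <;> constructor <;> linarith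

lemma Sw_aff (σ : List (Fin 2)) : 0 < sw σ ∧ ∀ x, Sw σ x = sw σ * x + Sw σ 0 := by
  induction σ with
  | nil => simp [Sw, sw]
  | cons i σ ih =>
    refine ⟨by have := ih.1; fin_cases i <;> simp [sw] <;> linarith, fun x => ?_⟩
    have := ih.2 x
    fin_cases i <;> simp [Sw, S1, S2, sw, this] <;> ring

lemma J_eq (σ : List (Fin 2)) : J σ = Icc (Sw σ 0) (sw σ + Sw σ 0) := by
  unfold J
  have h := Sw_aff σ
  have : Sw σ = fun x => sw σ * x + Sw σ 0 := by funext x; exact h.2 x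
  rw [this, Set.image_affine_Icc' h.1]
  congr 1 <;> simp

lemma J_vol (σ : List (Fin 2)) : (volume (J σ)).toReal = sw σ := by
  rw [J_eq, Real.volume_Icc, add_sub_cancel_right, ENNReal.toReal_ofReal (Sw_aff σ).1.le]

lemma P_J (hP : SelfSimilar P) (σ : List (Fin 2)) : (P (J σ)).toReal = pw σ := by
  have hmeas : ∀ σ, MeasurableSet (J σ) := fun σ => by rw [J_eq]; exact measurableSet_Icc
  have hnull : P (Icc 0 1)ᶜ = 0 := supp hP
  induction σ with
  | nil =>
    have : P (J []) = 1 := by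
      have h : J [] = Icc 0 1 := by simp [J, Sw]
      rw [h]
      exact (prob_compl_eq_zero_iff measurableSet_Icc).1 hnull
    simp [this, pw]
  | cons i σ ih =>
    rw [apply_split hP (hmeas _)]
    have hz : ∀ A : Set ℝ, A ⊆ (Icc 0 1)ᶜ → P A = 0 := fun A hA => measure_mono_null hA hnull
    fin_cases i
    · have e1 : S1 ⁻¹' (J (0 :: σ)) = J σ := by
        have : J (0 :: σ) = S1 '' J σ := by simp [J, Sw, image_comp]
        rw [this]
        exact preimage_image_eq _ (fun x y h => by simp only [S1] at h; linarith)
      have e2 : P (S2 ⁻¹' (J (0 :: σ))) = 0 := by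
        refine hz _ (fun x hx hx' => ?_)
        obtain ⟨y, hy, hxy⟩ := hx
        have := (J_subset σ ⟨y, hy, rfl⟩).2
        simp [Sw, S1, S2] at hxy
        linarith [hx'.1]
      simp only [Fin.zero_eta, e1, e2]
      simp [pw, ih]
    · have e1 : S2 ⁻¹' (J (1 :: σ)) = J σ := by
        have : J (1 :: σ) = S2 '' J σ := by simp [J, Sw, image_comp]
        rw [this]
        exact preimage_image_eq _ (fun x y h => by simp only [S2] at h; linarith)
      have e2 : P (S1 ⁻¹' (J (1 :: σ))) = 0 := by
        refine hz _ (fun x hx hx' => ?_)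
        obtain ⟨y, hy, hxy⟩ := hx
        have := (J_subset σ ⟨y, hy, rfl⟩).1
        simp [Sw, S1, S2] at hxy
        linarith [hx'.2]
      simp only [Fin.mk_one, e1, e2]
      simp [pw, ih]

lemma qnt_eq (hP : SelfSimilar P) (σ : List (Fin 2)) : qnt P σ = q σ := by
  unfold qnt
  rw [P_J hP, J_vol]
  induction σ with
  | nil => simp [pw, sw, q]
  | cons i σ ih =>
    rw [q, ← ih]
    fin_cases i <;> simp [pw, sw] <;> ring
end


section
variable {P : Measure ℝ} [IsProbabilityMeasure P]

/-- truncated first moment -/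
def phi (P : Measure ℝ) (t : ℝ) : ℝ := ∫ x, max (t - x) 0 ∂P

lemma phi_nonpos (hP : SelfSimilar P) {t : ℝ} (ht : t ≤ 0) : phi P t ≤ 0 := by
  have := mono hP (f := fun x => max (t - x) 0) (g := fun x => 0 + 0 * x) (by fun_prop) (by fun_prop)
    (fun x h0 h1 => by rw [max_eq_right (by linarith)]; simp)
  rw [lin hP] at this
  unfold phi; linarith

lemma phi_ge (hP : SelfSimilar P) {t : ℝ} (ht : 1 ≤ t) : phi P t ≤ t - 2/3 := by
  have := mono hP (f := fun x => max (t - x) 0) (g := fun x => t + (-1) * x) (by fun_prop)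
    (by fun_prop) (fun x h0 h1 => by rw [max_eq_left (by linarith)]; linarith)
  rw [lin hP] at this
  unfold phi; linarith

lemma phi_split (hP : SelfSimilar P) (t : ℝ) :
    phi P t = 1/16 * phi P (4 * t) + 3/8 * phi P (2 * t - 1) := by
  unfold phi
  rw [split hP (f := fun x => max (t - x) 0) (by fun_prop)]
  have e1 : ∀ x : ℝ, max (t - x/4) 0 = 1/4 * max (4 * t - x) 0 := by
    intro x
    rw [mul_max_of_nonneg _ _ (by norm_num : (0:ℝ) ≤ 1/4)]
    congr 1 <;> ring
  have e2 : ∀ x : ℝ, max (t - (x/2+1/2)) 0 = 1/2 * max (2 * t - 1 - x) 0 := by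
    intro x
    rw [mul_max_of_nonneg _ _ (by norm_num : (0:ℝ) ≤ 1/2)]
    congr 1 <;> ring
  simp_rw [e1, e2, integral_const_mul]
  ring

lemma phi_le_aux (hP : SelfSimilar P) (k : ℕ) : ∀ t, 0 ≤ t → t ≤ 1 →
    phi P t ≤ 3/8 * t ^ 2 + (3/8 : ℝ) ^ k := by
  induction k with
  | zero =>
    intro t h0 h1
    have := mono hP (f := fun x => max (t - x) 0) (g := fun x => 1 + 0 * x) (by fun_prop)
      (by fun_prop) (fun x h0 h1 => by
        rw [max_le_iff]; constructor <;> linarith)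
    rw [lin hP] at this
    unfold phi
    simp only [pow_zero]
    nlinarith [sq_nonneg t]
  | succ k ih =>
    intro t h0 h1
    have hk : (0:ℝ) < (3/8) ^ k := by positivity
    rw [phi_split hP t, pow_succ (3/8 : ℝ) k]
    by_cases ht : t ≤ 1/4
    · have h2 := phi_nonpos hP (t := 2 * t - 1) (by linarith)
      have h3 := ih (4 * t) (by linarith) (by linarith)
      nlinarith
    · have h2 := phi_ge hP (t := 4 * t) (by linarith)
      by_cases ht' : t ≤ 1/2
      · have h3 := phi_nonpos hP (t := 2 * t - 1) (by linarith)
        nlinarith [sq_nonneg (3 * t - 1)]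
      · have h3 := ih (2 * t - 1) (by linarith) (by linarith)
        nlinarith [mul_nonneg (show 0 ≤ t - 1/2 by linarith) (show 0 ≤ 1 - t by linarith)]

lemma phi_le (hP : SelfSimilar P) {t : ℝ} (h0 : 0 ≤ t) (h1 : t ≤ 1) :
    phi P t ≤ 3/8 * t ^ 2 := by
  have hlim : Filter.Tendsto (fun k : ℕ => 3/8 * t ^ 2 + (3/8 : ℝ) ^ k) Filter.atTop
      (nhds (3/8 * t ^ 2 + 0)) :=
    (tendsto_pow_atTop_nhds_zero_of_lt_one (by norm_num) (by norm_num)).const_add _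
  rw [add_zero] at hlim
  exact ge_of_tendsto' hlim (fun k => phi_le_aux hP k t h0 h1)

lemma two_means (hP : SelfSimilar P) {α : Finset ℝ} (hα : α.Nonempty) {a c : ℝ} (hac : a < c)
    (h1 : 1 < a + c) (hc : c ≤ 1) (ha1 : a ≤ 1) (hsub : ∀ p ∈ α, p = a ∨ p = c) :
    13/64 * (16/153) < distortion P α := by
  obtain ⟨h, hh⟩ : ∃ h, h = (a + c) / 2 - 1/2 := ⟨_, rfl⟩
  have hpos : 0 < h := by linarith
  have hle : h ≤ 1/2 := by linarith
  have hlow : ∫ x, ((-c + 1 * x) ^ 2 - 2 * (c - a) * max ((1/2 + h) - x) 0) ∂P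
      ≤ e P α 0 1 := by
    refine mono hP (by fun_prop) (e_cont hα _ _) (fun x h0 h1 => le_d hα ?_)
    intro p hp
    have hm1 := le_max_left ((1/2 + h) - x) 0
    have hm2 := le_max_right ((1/2 + h) - x) 0
    rcases hsub p hp with rfl | rfl
    · nlinarith [mul_le_mul_of_nonneg_left hm1 (show 0 ≤ c - p by linarith)]
    · nlinarith [mul_nonneg (show 0 ≤ p - a by linarith) hm2]
  rw [← dist_eq, integral_sub (integ hP (by fun_prop)) (integ hP (by fun_prop)), quad hP,
    integral_const_mul] at hlow
  have h2 := phi_split hP (1/2 + h)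
  have h3 := phi_ge hP (t := 4 * (1/2 + h)) (by linarith)
  have h4 := phi_le hP (t := 2 * (1/2 + h) - 1) (by linarith) (by linarith)
  obtain ⟨K, hK⟩ : ∃ K, K = 1/12 + h/4 + 9 * h^2/16 := ⟨_, rfl⟩
  have h5 : phi P (1/2 + h) ≤ K := by rw [hK]; nlinarith
  have h6 : (c - a) * phi P (1/2 + h) ≤ (c - a) * K :=
    mul_le_mul_of_nonneg_left h5 (by linarith)
  change _ - 2 * (c - a) * phi P (1/2 + h) ≤ _ at hlow
  have h7 : a = 1 + 2 * h - c := by linarith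
  rw [h7] at h6 hlow
  have h8 : 4 * K ^ 2 + 2/3 * K - 4 * h * K < 1/12 := by
    have : 4 * K ^ 2 + 2/3 * K - 4 * h * K = 1/12 - (9/8) * h^3 + (81/64) * h^4 := by
      rw [hK]; ring
    rw [this]
    have : 0 < h^3 := by positivity
    nlinarith
  nlinarith [sq_nonneg (c - 2/3 - 2 * K)]

lemma sqle {A B : ℝ} (h0 : 0 ≤ A) (h : A ≤ B ∨ A ≤ -B) : A ^ 2 ≤ B ^ 2 := by
  rcases h with h | h <;> nlinarith

lemma near {x y p : ℝ} (h : (y ≤ p ∧ 2 * x ≤ y + p) ∨ (p ≤ y ∧ y + p ≤ 2 * x)) :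
    (x - y) ^ 2 ≤ (x - p) ^ 2 := by
  rcases h with ⟨h1, h2⟩ | ⟨h1, h2⟩
  · nlinarith [mul_nonneg (sub_nonneg.2 h1) (sub_nonneg.2 h2)]
  · nlinarith [mul_nonneg (sub_nonneg.2 h1) (sub_nonneg.2 h2)]

set_option maxHeartbeats 4000000 in
lemma straddle (hP : SelfSimilar P) {α : Finset ℝ} (hα : α.Nonempty)
    (hI : ∀ p ∈ α, 0 ≤ p ∧ p ≤ 1) {a : ℝ} (ha : a ∈ α)
    (hL : ∀ p ∈ α, p < a → p + a < 1/2) (hR : ∀ p ∈ α, a < p → 1 < p + a)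
    (hN : 2 ≤ α.card)
    (h2 : ∀ β : Finset ℝ, β.Nonempty → β.card < α.card → β.card ≤ 2 →
      13/64 * (16/153) ≤ distortion P β)
    (h3 : ∀ β : Finset ℝ, β.Nonempty → β.card < α.card → β.card ≤ 3 →
      55/1024 * (16/153) ≤ distortion P β) :
    ∃ t : T, t.sz ≤ α.card ∧ t.cost * (16/153) < distortion P α := by
  -- reference trees
  have r2 : 2 ≤ α.card → 13/64 * (16/153) < distortion P α →
      ∃ t : T, t.sz ≤ α.card ∧ t.cost * (16/153) < distortion P α := fun h h' =>
    ⟨.N .L .L, by simpa [T.sz] using h, by simp only [T.cost]; linarith⟩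
  have r3 : 3 ≤ α.card → 55/1024 * (16/153) < distortion P α →
      ∃ t : T, t.sz ≤ α.card ∧ t.cost * (16/153) < distortion P α := fun h h' =>
    ⟨.N .L (.N .L .L), by simpa [T.sz] using h, by simp only [T.cost]; linarith⟩
  have r4 : 4 ≤ α.card → 421/16384 * (16/153) < distortion P α →
      ∃ t : T, t.sz ≤ α.card ∧ t.cost * (16/153) < distortion P α := fun h h' =>
    ⟨.N .L (.N .L (.N .L .L)), by simpa [T.sz] using h, by simp only [T.cost]; linarith⟩
  have r5 : 5 ≤ α.card → 217/16384 * (16/153) < distortion P α →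
      ∃ t : T, t.sz ≤ α.card ∧ t.cost * (16/153) < distortion P α := fun h h' =>
    ⟨.N (.N .L .L) (.N .L (.N .L .L)), by simpa [T.sz] using h, by simp only [T.cost]; linarith⟩
  have r6 : 6 ≤ α.card → 81/10000 * (16/153) < distortion P α →
      ∃ t : T, t.sz ≤ α.card ∧ t.cost * (16/153) < distortion P α := fun h h' =>
    ⟨.N (.N .L .L) (.N .L (.N .L (.N .L .L))), by simpa [T.sz] using h,
      by simp only [T.cost]; linarith⟩
  have r7 : 7 ≤ α.card → 57/10000 * (16/153) < distortion P α →
      ∃ t : T, t.sz ≤ α.card ∧ t.cost * (16/153) < distortion P α := fun h h' =>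
    ⟨.N (.N .L .L) (.N (.N .L .L) (.N .L (.N .L .L))), by simpa [T.sz] using h,
      by simp only [T.cost]; linarith⟩
  obtain ⟨D, hD⟩ : ∃ D, D = distortion P α := ⟨_, rfl⟩
  rw [← hD] at r2 r3 r4 r5 r6 r7 ⊢
  -- decomposition
  obtain ⟨e1, he1⟩ : ∃ z, z = e P α 0 (1/4) := ⟨_, rfl⟩
  obtain ⟨e2, he2⟩ : ∃ z, z = e P α (1/2) (1/2) := ⟨_, rfl⟩
  obtain ⟨e11, he11⟩ : ∃ z, z = e P α 0 (1/16) := ⟨_, rfl⟩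
  obtain ⟨e12, he12⟩ : ∃ z, z = e P α (1/8) (1/8) := ⟨_, rfl⟩
  obtain ⟨e21, he21⟩ : ∃ z, z = e P α (1/2) (1/8) := ⟨_, rfl⟩
  obtain ⟨e22, he22⟩ : ∃ z, z = e P α (3/4) (1/4) := ⟨_, rfl⟩
  obtain ⟨e121, he121⟩ : ∃ z, z = e P α (1/8) (1/32) := ⟨_, rfl⟩
  obtain ⟨e122, he122⟩ : ∃ z, z = e P α (3/16) (1/16) := ⟨_, rfl⟩
  have s0 : D = 1/4 * e1 + 3/4 * e2 := by
    rw [hD, dist_eq, e_split hP hα, he1, he2]; norm_num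
  have s1 : e1 = 1/4 * e11 + 3/4 * e12 := by
    rw [he1, e_split hP hα, he11, he12]; norm_num
  have s2 : e2 = 1/4 * e21 + 3/4 * e22 := by
    rw [he2, e_split hP hα, he21, he22]; norm_num
  have s12 : e12 = 1/4 * e121 + 3/4 * e122 := by
    rw [he12, e_split hP hα, he121, he122]; norm_num
  have p1 : 0 ≤ e1 := he1 ▸ e_nonneg _ _ _
  have p2 : 0 ≤ e2 := he2 ▸ e_nonneg _ _ _
  have p11 : 0 ≤ e11 := he11 ▸ e_nonneg _ _ _
  have p12 : 0 ≤ e12 := he12 ▸ e_nonneg _ _ _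
  have p21 : 0 ≤ e21 := he21 ▸ e_nonneg _ _ _
  have p22 : 0 ≤ e22 := he22 ▸ e_nonneg _ _ _
  have p121 : 0 ≤ e121 := he121 ▸ e_nonneg _ _ _
  have p122 : 0 ≤ e122 := he122 ▸ e_nonneg _ _ _
  -- left and right parts
  obtain ⟨β, hβ⟩ : ∃ β, β = α.filter (· < a) := ⟨_, rfl⟩
  obtain ⟨γ, hγ⟩ : ∃ γ, γ = α.filter (a < ·) := ⟨_, rfl⟩
  have mβ : ∀ p, p ∈ β ↔ p ∈ α ∧ p < a := by intro p; simp [hβ]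
  have mγ : ∀ p, p ∈ γ ↔ p ∈ α ∧ a < p := by intro p; simp [hγ]
  have hcard : α.card = β.card + 1 + γ.card := by
    have hU : α = (β ∪ {a}) ∪ γ := by
      ext p
      simp only [Finset.mem_union, Finset.mem_singleton, mβ, mγ]
      constructor
      · intro hp
        rcases lt_trichotomy p a with h | h | h
        · exact Or.inl (Or.inl ⟨hp, h⟩)
        · exact Or.inl (Or.inr h)
        · exact Or.inr ⟨hp, h⟩
      · rintro ((h | h) | h)
        · exact h.1
        · exact h ▸ ha
        · exact h.1
    conv_lhs => rw [hU]
    rw [Finset.card_union_of_disjoint, Finset.card_union_of_disjoint, Finset.card_singleton]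
    · rw [Finset.disjoint_left]; intro p hp hp'
      rw [Finset.mem_singleton] at hp'
      exact absurd ((mβ p).1 hp).2 (by rw [hp']; exact lt_irrefl _)
    · rw [Finset.disjoint_left]; intro p hp hp'
      have := ((mγ p).1 hp').2
      rw [Finset.mem_union, Finset.mem_singleton, mβ] at hp
      rcases hp with h | h <;> linarith
  have tri : ∀ p ∈ α, p ∈ β ∨ p = a ∨ p ∈ γ := by
    intro p hp
    rcases lt_trichotomy p a with h | h | h
    · exact Or.inl ((mβ p).2 ⟨hp, h⟩)
    · exact Or.inr (Or.inl h)
    · exact Or.inr (Or.inr ((mγ p).2 ⟨hp, h⟩))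
  have ha0 := (hI a ha).1
  have ha1 := (hI a ha).2
  rcases Nat.eq_zero_or_pos β.card with hk | hk
  · -- k = 0
    have hnb : ∀ p ∈ α, p = a ∨ (a < p ∧ 1 < p + a) := by
      intro p hp
      rcases tri p hp with h | h | h
      · rw [Finset.card_eq_zero.1 hk] at h; simp at h
      · exact Or.inl h
      · exact Or.inr ⟨((mγ p).1 h).2, hR p hp ((mγ p).1 h).2⟩
    rcases Nat.lt_or_ge γ.card 2 with hm | hm
    · obtain ⟨c, hc⟩ := Finset.card_eq_one.1 (show γ.card = 1 by omega)
      have hcγ := (mγ c).1 (by simp [hc])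
      refine r2 hN ?_
      rw [hD]
      refine two_means hP hα (a := a) (c := c) hcγ.2 (by linarith [hR c hcγ.1 hcγ.2])
        (hI c hcγ.1).2 ha1 ?_
      intro p hp
      rcases tri p hp with h | h | h
      · rw [Finset.card_eq_zero.1 hk] at h; simp at h
      · exact Or.inl h
      · rw [hc] at h; exact Or.inr (by simpa using h)
    · refine r3 (by omega) ?_
      have b1 := e_quad hP hα 0 (1/4) (-a) (1/4) (by
        intro x hx0 hx1 p hp
        have : (x/4 - a) ^ 2 ≤ (x/4 - p) ^ 2 := by
          rcases hnb p hp with h | h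
          · rw [h]
          · exact near (Or.inl ⟨h.1.le, by linarith⟩)
        convert this using 2 <;> ring)
      rw [← he1] at b1
      by_cases ha3 : a ≤ 3/8
      · have b21 := e_quad hP hα (1/2) (1/8) (1/2 - a) (-1/8) (by
          intro x hx0 hx1 p hp
          refine sqle (by linarith) ?_
          rcases hnb p hp with h | h
          · left; rw [h]; linarith
          · right; linarith)
        rw [← he21] at b21
        nlinarith [sq_nonneg (a - (1/6 + 3/28))]
      · nlinarith [mul_pos (show 0 < a - 3/8 by linarith) (show 0 < a + 1/24 by linarith)]
  -- k ≥ 1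
  obtain ⟨y, hy⟩ := Finset.card_pos.1 hk
  have hyα := (mβ y).1 hy
  have ha2 : a < 1/2 := by linarith [hL y hyα.1 hyα.2, (hI y hyα.1).1]
  have cls : ∀ p ∈ α, (p < a ∧ p + a < 1/2 ∧ 0 ≤ p) ∨ p = a ∨ (1 < p + a ∧ p ≤ 1 ∧ a < p) := by
    intro p hp
    rcases tri p hp with h | h | h
    · exact Or.inl ⟨((mβ p).1 h).2, hL p hp ((mβ p).1 h).2, (hI p hp).1⟩
    · exact Or.inr (Or.inl h)
    · exact Or.inr (Or.inr ⟨hR p hp ((mγ p).1 h).2, (hI p hp).2, ((mγ p).1 h).2⟩)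
  have b12 : 3/8 ≤ a → 28/51 * (1/8)^2 ≤ e12 := by
    intro ha3
    have := e_quad hP hα (1/8) (1/8) 0 (1/8) (by
      intro x hx0 hx1 p hp
      refine sqle (by linarith) ?_
      rcases cls p hp with h | h | h
      · left; linarith
      · right; linarith
      · right; linarith)
    rw [← he12] at this; linarith
  rcases Nat.eq_zero_or_pos γ.card with hm | hm
  · -- m = 0
    refine r2 hN ?_
    have := e_quad hP hα (1/2) (1/2) 0 (1/2) (by
      intro x hx0 hx1 p hp
      refine sqle (by linarith) (Or.inl ?_)
      rcases tri p hp with h | h | h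
      · linarith [((mβ p).1 h).2]
      · linarith
      · rw [Finset.card_eq_zero.1 hm] at h; simp at h)
    rw [← he2] at this
    linarith
  rcases Nat.lt_or_ge γ.card 2 with hm2 | hm2
  · -- m = 1
    refine r3 (by omega) ?_
    obtain ⟨c, hc⟩ := Finset.card_eq_one.1 (show γ.card = 1 by omega)
    have hcγ := (mγ c).1 (by simp [hc])
    have hc1 := (hI c hcγ.1).2
    have hac := hR c hcγ.1 hcγ.2
    have cls1 : ∀ p ∈ α, (p < a ∧ p + a < 1/2) ∨ p = a ∨ p = c := by
      intro p hp
      rcases tri p hp with h | h | h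
      · exact Or.inl ⟨((mβ p).1 h).2, hL p hp ((mβ p).1 h).2⟩
      · exact Or.inr (Or.inl h)
      · rw [hc] at h; exact Or.inr (Or.inr (by simpa using h))
    rcases lt_or_ge c (3/4) with hc3 | hc3
    · have := e_quad hP hα (3/4) (1/4) 0 (1/4) (by
        intro x hx0 hx1 p hp
        refine sqle (by linarith) (Or.inl ?_)
        rcases cls1 p hp with h | h | h <;> linarith)
      rw [← he22] at this
      linarith
    · have b22 := e_quad hP hα (3/4) (1/4) (3/4 - c) (1/4) (by
        intro x hx0 hx1 p hp
        have : (3/4 + 1/4 * x - c) ^ 2 ≤ (3/4 + 1/4 * x - p) ^ 2 := by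
          rcases cls1 p hp with h | h | h
          · exact near (Or.inr ⟨by linarith, by linarith⟩)
          · exact near (Or.inr ⟨by linarith, by linarith⟩)
          · rw [h]
        convert this using 2; ring)
      rw [← he22] at b22
      have b22' : 1/16 * (16/153) ≤ e22 := by nlinarith [sq_nonneg (3/4 - c + 1/6)]
      rcases lt_or_ge a (3/8) with ha3 | ha3
      · have b21 := e_quad hP hα (1/2) (1/8) (1/8) 0 (by
          intro x hx0 hx1 p hp
          refine sqle (by linarith) ?_
          rcases cls1 p hp with h | h | h
          · left; linarith
          · left; linarith
          · right; linarith)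
        rw [← he21] at b21
        linarith
      · have b21 := e_quad hP hα (1/2) (1/8) 0 (1/8) (by
          intro x hx0 hx1 p hp
          refine sqle (by linarith) ?_
          rcases cls1 p hp with h | h | h
          · left; linarith
          · left; linarith
          · right; linarith)
        rw [← he21] at b21
        linarith [b12 ha3]
  -- m ≥ 2
  rcases le_or_gt (3/8) a with ha3 | ha3
  · -- a ≥ 3/8
    have b12' := b12 ha3
    rcases Nat.lt_or_ge α.card 5 with hN5 | hN5
    · refine r4 (by omega) ?_
      obtain ⟨y', hy'⟩ := Finset.card_eq_one.1 (show β.card = 1 by omega)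
      have hyy : y' = y := by 
        rw [hy', Finset.mem_singleton] at hy; exact hy.symm
      rw [hyy] at hy'
      have cls1 : ∀ p ∈ α, p = y ∨ p = a ∨ (1 < p + a ∧ a < p) := by
        intro p hp
        rcases tri p hp with h | h | h
        · rw [hy'] at h; exact Or.inl (by simpa using h)
        · exact Or.inr (Or.inl h)
        · exact Or.inr (Or.inr ⟨hR p hp ((mγ p).1 h).2, ((mγ p).1 h).2⟩)
      have hya := hL y hyα.1 hyα.2
      have b11 := e_quad hP hα 0 (1/16) (-y) (1/16) (by
        intro x hx0 hx1 p hp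
        have : (x/16 - y) ^ 2 ≤ (x/16 - p) ^ 2 := by
          rcases cls1 p hp with h | h | h
          · rw [h]
          · exact near (Or.inl ⟨by linarith, by linarith [(hI y hyα.1).1]⟩)
          · exact near (Or.inl ⟨by linarith, by linarith [(hI y hyα.1).1]⟩)
        convert this using 2 <;> ring)
      have b121 := e_quad hP hα (1/8) (1/32) (1/8 - y) (1/32) (by
        intro x hx0 hx1 p hp
        have hy0 := (hI y hyα.1).1
        refine sqle (by linarith) ?_
        rcases cls1 p hp with h | h | h
        · left; linarith
        · right; linarith
        · right; linarith)
      have b122 := e_quad hP hα (3/16) (1/16) (1/16) (1/16) (by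
        intro x hx0 hx1 p hp
        refine sqle (by linarith) ?_
        rcases cls1 p hp with h | h | h
        · left; linarith
        · right; linarith
        · right; linarith)
      rw [← he11] at b11
      rw [← he121] at b121
      rw [← he122] at b122
      have hcd : (insert a γ).card ≤ 3 := (Finset.card_insert_le _ _).trans (by omega)
      have b2 := e_set hP hα (β := insert a γ) (by simp) (1/2) (1/2) (by norm_num) (by
        intro x hx0 hx1 p hp
        rcases tri p hp with h | h | h
        · exact ⟨a, by simp, near (Or.inr ⟨((mβ p).1 h).2.le,
            by linarith [hL p hp ((mβ p).1 h).2]⟩)⟩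
        · exact ⟨a, by simp, by rw [h]⟩
        · exact ⟨p, by simp [h], le_rfl⟩)
      have hci := Finset.card_image_le (s := insert a γ) (f := fun p : ℝ => (p - 1/2) / (1/2))
      have b2' := h3 ((insert a γ).image (fun p => (p - 1/2) / (1/2)))
        ((Finset.insert_nonempty _ _).image _) (by omega) (by omega)
      rw [← he2] at b2
      nlinarith [sq_nonneg (y - 1/24 - 1/28)]
    · exact r5 hN5 (by linarith)
  -- a < 3/8
  have b21 := e_quad hP hα (1/2) (1/8) (1/2 - a) (-1/8) (by
    intro x hx0 hx1 p hp
    refine sqle (by linarith) ?_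
    rcases cls p hp with h | h | h
    · left; linarith
    · left; linarith
    · right; linarith)
  rw [← he21] at b21
  have hγne : γ.Nonempty := Finset.card_pos.1 hm
  have b22 := e_set hP hα (β := γ) hγne (3/4) (1/4) (by norm_num) (by
    intro x hx0 hx1 p hp
    obtain ⟨c, hc⟩ := hγne
    have hcα := (mγ c).1 hc
    have hc1 := hR c hcα.1 hcα.2
    have hc2 := (hI c hcα.1).2
    rcases tri p hp with h | h | h
    · exact ⟨c, hc, near (Or.inr ⟨by linarith [((mβ p).1 h).2], by linarith [((mβ p).1 h).2]⟩)⟩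
    · exact ⟨c, hc, near (Or.inr ⟨by linarith, by linarith⟩)⟩
    · exact ⟨p, h, le_rfl⟩)
  have hci := Finset.card_image_le (s := γ) (f := fun p : ℝ => (p - 3/4) / (1/4))
  have b22' := h2 (γ.image (fun p => (p - 3/4) / (1/4))) (hγne.image _) (by omega)
  have b22'' := h3 (γ.image (fun p => (p - 3/4) / (1/4))) (hγne.image _) (by omega)
  rw [← he22] at b22
  have b21' : 11/51 * (1/64) ≤ e21 := by
    nlinarith [mul_pos (show 0 < 3/8 - a by linarith) (show 0 < 3/8 - a by linarith)]
  rcases Nat.lt_or_ge β.card 2 with hk2 | hk2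
  · -- k = 1
    rcases le_or_gt a (5/16) with ha5 | ha5
    · have b21'' : 1/81 ≤ e21 := by
        nlinarith [mul_nonneg (show 0 ≤ 5/16 - a by linarith) (show 0 ≤ 5/16 - a by linarith)]
      rcases Nat.lt_or_ge α.card 5 with hN5 | hN5
      · have := b22' (by omega)
        exact r4 (by omega) (by linarith)
      · exact r5 hN5 (by linarith)
    · have b122 := e_quad hP hα (3/16) (1/16) (a - 5/16) (1/16) (by
        intro x hx0 hx1 p hp
        refine sqle (by linarith) ?_
        rcases cls p hp with h | h | h
        · left; linarith
        · right; linarith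
        · right; linarith)
      rw [← he122] at b122
      have key : 198/10000 * (16/153) ≤ 9/64 * e122 + 3/16 * e21 := by
        nlinarith [sq_nonneg (a - 3/8 + 1/48)]
      rcases Nat.lt_or_ge α.card 5 with hN5 | hN5
      · have := b22' (by omega)
        exact r4 (by omega) (by linarith)
      · exact r5 hN5 (by linarith)
  -- k ≥ 2
  have b1 := e_set hP hα (β := insert a β) (by simp) 0 (1/4) (by norm_num) (by
    intro x hx0 hx1 p hp
    rcases tri p hp with h | h | h
    · exact ⟨p, by simp [h], le_rfl⟩
    · exact ⟨a, by simp, by rw [h]⟩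
    · exact ⟨a, by simp, near (Or.inl ⟨((mγ p).1 h).2.le,
        by linarith [hR p hp ((mγ p).1 h).2]⟩)⟩)
  have hci1 := Finset.card_image_le (s := insert a β) (f := fun p : ℝ => (p - 0) / (1/4))
  have hcd1 := Finset.card_insert_le a β
  have b1' := h3 ((insert a β).image (fun p => (p - 0) / (1/4)))
    ((Finset.insert_nonempty _ _).image _) (by omega)
  rw [← he1] at b1
  rcases Nat.lt_or_ge γ.card 3 with hm3 | hm3
  · have := b22' (by omega)
    rcases Nat.lt_or_ge α.card 6 with hN6 | hN6
    · have := b1' (by omega)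
      exact r5 (by omega) (by linarith)
    · exact r6 hN6 (by linarith)
  · rcases Nat.lt_or_ge α.card 7 with hN7 | hN7
    · have := b22'' (by omega)
      have := b1' (by omega)
      exact r6 (by omega) (by linarith)
    · exact r7 hN7 (by linarith)
end


section
variable {P : Measure ℝ} [IsProbabilityMeasure P]

/-- structural conclusion for a finite set -/
def Concl (P : Measure ℝ) (α : Finset ℝ) : Prop :=
  ∃ t : T, t.sz = α.card ∧ t.cost * (16/153) ≤ distortion P α ∧
    (distortion P α = t.cost * (16/153) → α = t.pts)

lemma concl_of_lt {α : Finset ℝ} {t : T} (h : t.sz ≤ α.card)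
    (h' : t.cost * (16/153) < distortion P α) : Concl P α := by
  obtain ⟨t', h1, h2⟩ := t.grow _ h
  exact ⟨t', h1, by linarith, fun h3 => by linarith⟩

lemma core (hP : SelfSimilar P) {α : Finset ℝ} (hα : α.Nonempty)
    (hI : ∀ p ∈ α, 0 ≤ p ∧ p ≤ 1)
    (IH : ∀ β : Finset ℝ, β.Nonempty → β.card < α.card → Concl P β) : Concl P α := by
  rcases Nat.lt_or_ge α.card 2 with hN | hN
  · have hc := Finset.card_pos.2 hα
    obtain ⟨a, rfl⟩ := Finset.card_eq_one.1 (show α.card = 1 by omega)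
    refine ⟨.L, by simp [T.sz], ?_, ?_⟩
    · rw [dist_single hP]; simp only [T.cost]; nlinarith [sq_nonneg (a - 2/3)]
    · rw [dist_single hP]; simp only [T.cost, T.pts]
      intro h
      have : (a - 2/3) ^ 2 = 0 := by linarith
      have : a = 2/3 := by have := pow_eq_zero_iff (two_ne_zero) |>.1 this; linarith
      rw [this]
  have hLne : (α.filter (fun a => ∀ c ∈ α, a < c → 1 < a + c)).Nonempty := by
    refine ⟨α.max' hα, ?_⟩
    rw [Finset.mem_filter]
    exact ⟨α.max'_mem hα, fun c hc h => absurd (α.le_max' c hc) (not_le.2 h)⟩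
  obtain ⟨a, haL, hamin⟩ := Finset.exists_min_image _ (fun x : ℝ => x) hLne
  rw [Finset.mem_filter] at haL
  obtain ⟨ha, haR⟩ := haL
  by_cases hgood : ∃ b ∈ α, b < a ∧ (∀ p ∈ α, p < a → p ≤ b) ∧ 1/2 ≤ b + a ∧ b + a ≤ 1
  · obtain ⟨b, hb, hba, hbmax, hlo, hhi⟩ := hgood
    obtain ⟨β, hβ⟩ : ∃ β, β = α.filter (· < a) := ⟨_, rfl⟩
    obtain ⟨γ, hγ⟩ : ∃ γ, γ = α.filter (fun p => ¬ p < a) := ⟨_, rfl⟩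
    have mβ : ∀ p, p ∈ β ↔ p ∈ α ∧ p < a := by intro p; simp [hβ]
    have mγ : ∀ p, p ∈ γ ↔ p ∈ α ∧ a ≤ p := by intro p; simp [hγ]
    have hcard : β.card + γ.card = α.card := by
      rw [hβ, hγ]; exact Finset.card_filter_add_card_filter_not _
    have hβne : β.Nonempty := ⟨b, (mβ b).2 ⟨hb, hba⟩⟩
    have hγne : γ.Nonempty := ⟨a, (mγ a).2 ⟨ha, le_rfl⟩⟩
    have c1 := Finset.card_pos.2 hβne
    have c2 := Finset.card_pos.2 hγne
    have i1 : (β.image (fun p : ℝ => (p - 0) / (1/4))).card = β.card :=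
      Finset.card_image_of_injective _ (fun x y h => by
        linarith)
    have i2 : (γ.image (fun p : ℝ => (p - 1/2) / (1/2))).card = γ.card :=
      Finset.card_image_of_injective _ (fun x y h => by
        linarith)
    obtain ⟨t1, hs1, hc1, he1⟩ := IH _ (hβne.image (fun p : ℝ => (p - 0) / (1/4))) (by omega)
    obtain ⟨t2, hs2, hc2, he2⟩ := IH _ (hγne.image (fun p : ℝ => (p - 1/2) / (1/2))) (by omega)
    have b1 := e_set hP hα hβne 0 (1/4) (by norm_num) (by
      intro x hx0 hx1 p hp
      by_cases h : p < a
      · exact ⟨p, (mβ p).2 ⟨hp, h⟩, le_rfl⟩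
      · push Not at h
        exact ⟨b, (mβ b).2 ⟨hb, hba⟩, near (Or.inl ⟨by linarith, by linarith⟩)⟩)
    have b2 := e_set hP hα hγne (1/2) (1/2) (by norm_num) (by
      intro x hx0 hx1 p hp
      by_cases h : p < a
      · have := hbmax p hp h
        exact ⟨a, (mγ a).2 ⟨ha, le_rfl⟩, near (Or.inr ⟨by linarith, by linarith⟩)⟩
      · push Not at h
        exact ⟨p, (mγ p).2 ⟨hp, h⟩, le_rfl⟩)
    have s0 : distortion P α = 1/4 * e P α 0 (1/4) + 3/4 * e P α (1/2) (1/2) := by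
      rw [dist_eq, e_split hP hα]; norm_num
    refine ⟨.N t1 t2, by simp only [T.sz]; omega, by simp only [T.cost]; linarith, ?_⟩
    intro heq
    simp only [T.cost] at heq
    have q1 := he1 (by linarith)
    have q2 := he2 (by linarith)
    simp only [T.pts]
    rw [← q1, ← q2]
    ext p
    simp only [Finset.mem_union, Finset.mem_image, mβ, mγ, S1, S2]
    constructor
    · intro hp
      by_cases h : p < a
      · exact Or.inl ⟨_, ⟨p, ⟨hp, h⟩, rfl⟩, by ring⟩
      · exact Or.inr ⟨_, ⟨p, ⟨hp, not_lt.1 h⟩, rfl⟩, by ring⟩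
    · rintro (⟨_, ⟨r, hr, rfl⟩, rfl⟩ | ⟨_, ⟨r, hr, rfl⟩, rfl⟩)
      · convert hr.1 using 1; ring
      · convert hr.1 using 1; ring
  · have hL : ∀ p ∈ α, p < a → p + a < 1/2 := by
      intro p hp hpa
      have hne : (α.filter (· < a)).Nonempty := ⟨p, by simp [hp, hpa]⟩
      obtain ⟨b, hb, hbmax⟩ := Finset.exists_max_image _ (fun x : ℝ => x) hne
      rw [Finset.mem_filter] at hb
      have hbm : ∀ p ∈ α, p < a → p ≤ b := fun p hp h => hbmax p (by simp [hp, h])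
      have hle : b + a ≤ 1 := by
        by_contra hcon
        push Not at hcon
        have : b ∈ α.filter (fun a => ∀ c ∈ α, a < c → 1 < a + c) := by
          rw [Finset.mem_filter]
          refine ⟨hb.1, fun c hc hbc => ?_⟩
          have : a ≤ c := by
            by_contra hca
            exact absurd (hbm c hc (not_le.1 hca)) (not_le.2 hbc)
          linarith
        exact absurd (hamin b this) (not_le.2 hb.2)
      have hlt : b + a < 1/2 := by
        by_contra hcon
        exact hgood ⟨b, hb.1, hb.2, hbm, not_lt.1 hcon, hle⟩
      linarith [hbm p hp hpa]
    obtain ⟨t, h1, h2⟩ := straddle hP hα hI ha hL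
      (fun p hp h => by linarith [haR p hp h]) hN
      (fun β hβ h h' => by
        obtain ⟨t, h1, h2, _⟩ := IH β hβ h
        have := T.cost_two (t := t) (by omega)
        linarith)
      (fun β hβ h h' => by
        obtain ⟨t, h1, h2, _⟩ := IH β hβ h
        have := T.cost_three (t := t) (by omega)
        linarith)
    exact concl_of_lt h1 h2

lemma clamp_dist {x p : ℝ} (h0 : 0 ≤ x) (h1 : x ≤ 1) :
    (x - max 0 (min 1 p)) ^ 2 ≤ (x - p) ^ 2 := by
  rcases le_total p 0 with h | h
  · rw [max_eq_left ((min_le_right _ _).trans h)]; nlinarith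
  · rcases le_total p 1 with h' | h'
    · rw [min_eq_right h', max_eq_right h]
    · rw [min_eq_left h', max_eq_right zero_le_one]; nlinarith

lemma concl (hP : SelfSimilar P) (N : ℕ) : ∀ α : Finset ℝ, α.card = N → α.Nonempty →
    Concl P α := by
  induction N using Nat.strong_induction_on with
  | _ N ih =>
    intro α hN hα
    have IH : ∀ β : Finset ℝ, β.Nonempty → β.card < α.card → Concl P β :=
      fun β hβ h => ih _ (hN ▸ h) β rfl hβ
    let κ : ℝ → ℝ := fun p => max 0 (min 1 p)
    obtain ⟨α', hα'⟩ : ∃ α', α' = α.image κ := ⟨_, rfl⟩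
    have hne : α'.Nonempty := hα' ▸ hα.image _
    have hI : ∀ p ∈ α', 0 ≤ p ∧ p ≤ 1 := by
      intro p hp
      rw [hα', Finset.mem_image] at hp
      obtain ⟨r, _, rfl⟩ := hp
      exact ⟨le_max_left _ _, max_le zero_le_one (min_le_left _ _)⟩
    have hle : α'.card ≤ α.card := hα' ▸ Finset.card_image_le
    have hD : distortion P α' ≤ distortion P α := by
      rw [dist_eq, dist_eq]
      refine mono hP (e_cont hne _ _) (e_cont hα _ _) (fun x h0 h1 => le_d hα (fun p hp => ?_))
      have hk : κ p ∈ α' := hα' ▸ Finset.mem_image_of_mem κ hp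
      exact (d_le hk _).trans (clamp_dist (by linarith) (by linarith))
    rcases Nat.lt_or_ge α'.card α.card with hlt | hge
    · obtain ⟨t, h1, h2, _⟩ := IH α' hne hlt
      obtain ⟨t', h3, h4⟩ := t.grow_lt α.card (by omega)
      exact concl_of_lt h3.le (by linarith)
    · obtain ⟨t, h1, h2, h3⟩ := core hP hne hI (fun β hβ h => IH β hβ (by omega))
      refine ⟨t, by omega, by linarith, fun heq => ?_⟩
      have hp := h3 (by linarith)
      rw [← hp]
      have hfix : ∀ p ∈ α, κ p = p := by
        intro p hpα
        have hm := T.pts_mem (hp ▸ (hα' ▸ Finset.mem_image_of_mem κ hpα : κ p ∈ α'))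
        simp only [κ] at hm ⊢
        rcases le_total p 0 with h | h
        · rw [max_eq_left ((min_le_right _ _).trans h)] at hm; linarith [hm.1]
        · rcases le_total p 1 with h' | h'
          · rw [min_eq_right h', max_eq_right h]
          · rw [min_eq_left h', max_eq_right zero_le_one] at hm; linarith [hm.2]
      rw [hα']
      conv_lhs => rw [← Finset.image_id (s := α)]
      exact Finset.image_congr (fun p hp => (hfix p hp).symm)

lemma qError_le (n : ℕ) {α : Finset ℝ} (hα : α.Nonempty) (h : α.card ≤ n) :
    qError P n ≤ distortion P α := by
  refine csInf_le ⟨0, ?_⟩ ⟨α, hα, h, rfl⟩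
  rintro _ ⟨β, _, _, rfl⟩
  rw [dist_eq]; exact e_nonneg _ _ _

theorem final (hP : SelfSimilar P)
    (n : ℕ) (α : Finset ℝ) (hα : IsOptimal P n α)
    (O : Finset (List (Fin 2))) (hO : ∀ σ : List (Fin 2), σ ∈ O ↔ Sw σ (2 / 3) ∈ α)
    (τ : List (Fin 2)) (hτ : τ ∈ O) (hmax : ∀ σ ∈ O, qnt P σ ≤ qnt P τ) :
    IsOptimal P (n + 1)
      (((O.erase τ).image (fun σ => Sw σ (2 / 3))) ∪
        ({Sw (τ ++ [0]) (2 / 3), Sw (τ ++ [1]) (2 / 3)} : Finset ℝ)) := by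
  obtain ⟨hne, hc, hopt⟩ := hα
  obtain ⟨t, h1, h2, h3⟩ := concl hP _ α rfl hne
  have hbest : ∀ t' : T, t'.sz = n → qError P n ≤ t'.cost * (16/153) := fun t' ht' =>
    (qError_le n t'.pts_ne (ht' ▸ t'.pts_card)).trans (t'.upper hP)
  have hn : t.sz = n := by
    by_contra hcon
    obtain ⟨t', h4, h5⟩ := t.grow_lt n (by omega)
    have := hbest t' h4
    linarith
  have heq := h3 (le_antisymm (hopt ▸ hbest t hn) h2)
  have htmin : ∀ t' : T, t'.sz = n → t.cost ≤ t'.cost := by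
    intro t' ht'
    have := hbest t' ht'
    linarith
  have hOw : ∀ σ, σ ∈ O ↔ σ ∈ t.words := by
    intro σ
    rw [hO, heq, t.pts_eq, Finset.mem_image]
    exact ⟨fun ⟨ρ, hρ, h⟩ => Sw_inj _ _ h ▸ hρ, fun h => ⟨σ, h, rfl⟩⟩
  obtain ⟨t', hs, hcost, hw⟩ := t.split_leaf τ ((hOw τ).1 hτ)
  have hset : (((O.erase τ).image (fun σ => Sw σ (2 / 3))) ∪
        ({Sw (τ ++ [0]) (2 / 3), Sw (τ ++ [1]) (2 / 3)} : Finset ℝ)) = t'.pts := by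
    rw [t'.pts_eq]
    ext x
    simp only [Finset.mem_union, Finset.mem_image, Finset.mem_erase, Finset.mem_insert,
      Finset.mem_singleton, hw, hOw]
    constructor
    · rintro (⟨σ, ⟨h, h'⟩, rfl⟩ | h | h)
      · exact ⟨σ, Or.inl ⟨h', h⟩, rfl⟩
      · exact ⟨_, Or.inr (Or.inl rfl), h.symm⟩
      · exact ⟨_, Or.inr (Or.inr rfl), h.symm⟩
    · rintro ⟨σ, ⟨h, h'⟩ | h | h, rfl⟩
      · exact Or.inl ⟨σ, ⟨h', h⟩, rfl⟩
      · exact Or.inr (Or.inl (by rw [h]))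
      · exact Or.inr (Or.inr (by rw [h]))
  rw [hset]
  have hcard : t'.pts.card ≤ n + 1 := t'.pts_card.trans (by omega)
  refine ⟨t'.pts_ne, hcard, le_antisymm ?_ (qError_le _ t'.pts_ne hcard)⟩
  refine (t'.upper hP).trans (le_csInf ⟨_, t'.pts, t'.pts_ne, hcard, rfl⟩ ?_)
  rintro _ ⟨δ, hδ, hδc, rfl⟩
  obtain ⟨s, g1, g2, _⟩ := concl hP _ δ rfl hδ
  obtain ⟨s', g3, g4⟩ := s.grow (n + 1) (by omega)
  obtain ⟨s'', g5, g6⟩ := t.greedy s' (q τ) (fun σ hσ => by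
    have := hmax σ ((hOw σ).2 hσ)
    rwa [qnt_eq hP, qnt_eq hP] at this) (by omega)
  have := htmin s'' (by omega)
  linarith
end

end QZ


theorem stmt_19 (P : Measure ℝ) [IsProbabilityMeasure P] (hP : SelfSimilar P)
    (n : ℕ) (hn : 2 ≤ n) (α : Finset ℝ) (hα : IsOptimal P n α)
    (O : Finset (List (Fin 2))) (hO : ∀ σ : List (Fin 2), σ ∈ O ↔ Sw σ (2 / 3) ∈ α)
    (τ : List (Fin 2)) (hτ : τ ∈ O) (hmax : ∀ σ ∈ O, qnt P σ ≤ qnt P τ) :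
    IsOptimal P (n + 1)
      (((O.erase τ).image (fun σ => Sw σ (2 / 3))) ∪
        ({Sw (τ ++ [0]) (2 / 3), Sw (τ ++ [1]) (2 / 3)} : Finset ℝ)) := by
  exact QZ.final hP n α hα O hO τ hτ hmax
end
end
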